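/- arXiv:1211.2224 — 4 statements merged into one kernel-verified Lean document; each statement's English description precedes it below -/
import Mathlib

section
/- Let Ω = {(x₁,x₂) ∈ ℝ² : 0 < |x₂| < x₁ < h} be an isosceles right triangle with hypotenuse of length 2h, and let Γ = {x₁ = h, x₂ ∈ [−h,h]} be the hypotenuse. Let z̃₀ be the unique root of the equation z·cot(z) + 1 = 0 in the interval (0,π). Then the sharp constant C₁(Ω,Γ) in the inequality ‖w‖_{L²(Ω)} ≤ C₁‖∇w‖_{L²(Ω)} for all w ∈ H̃¹(Ω,Γ) is equal to h/z̃₀. -/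
open MeasureTheory Real

/-!
Put `κ = z₀ / h` and split `w` into its even and odd parts in `y`; the claim is
`κ² ∫ w² ≤ ∫ |∇w|²` for each. On the half triangle `0 < y < x < h`, reflect in the diagonal to get
a symmetric function `U` on the square `(0, h)²`, for which `∫ |∇w|²` becomes `∫ (∂ₓU)²` and
`∫ w²` becomes `½ ∫ U²`.

One-dimensional slices are controlled by `κ² ∫ f² ≤ ∫ f'² - κ cot (κ h) f(h)²` for `f(0) = 0`, which
comes from completing the square with the solution `κ cot (κ x)` of the Riccati equation
`A' = -κ² - A²`. For the odd part `U` vanishes at `x = 0`, and taking `π / (2 h)` for `κ` there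
suffices because `z₀ < 2 π / 3`. For the even part `U` has mean zero on the edge `x = h`. Let `m(x)`
be the mean of `U(x, ·)` and let `Φ` be the primitive in `x` of `U(x, y) + m(x) - m(y)`. Symmetry of
`U` makes `Φ` constant on the edge `x = h`, so `∫ U² = -∫ ∂ₓU Φ`, and the slice inequality bounds
`κ² ∫ Φ²` by `2 ∫ U²` since `κ h cot (κ h) ≥ -1`; Cauchy–Schwarz concludes.

Equality holds for `cos (κ x) + cos (κ y)`.
-/

section

open Set Filter Topology

theorem integral_mul_sq_le_of_riccati {a b : ℝ} (hab : a ≤ b) {s : Set ℝ} (hs : s.Countable)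
    {f g A q : ℝ → ℝ} (hf : ContinuousOn f (Icc a b))
    (hfg : ∀ x ∈ Ioo a b \ s, HasDerivAt f (g x) x)
    (hg : MemLp g 2 (volume.restrict (Ioc a b)))
    (hA : ContinuousOn A (Icc a b))
    (hAq : ∀ x ∈ Ioo a b \ s, HasDerivAt A (-q x - A x ^ 2) x)
    (hq : ContinuousOn q (Icc a b)) :
    ∫ x in a..b, q x * f x ^ 2 ≤
      (∫ x in a..b, g x ^ 2) - (A b * f b ^ 2 - A a * f a ^ 2) := by
  rw [← uIcc_of_le hab] at hf hA hq
  have hg_int : IntervalIntegrable g volume a b :=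
    (intervalIntegrable_iff_integrableOn_Ioc_of_le hab).2 (hg.integrable one_le_two)
  have hg_sq : IntervalIntegrable (fun x ↦ g x ^ 2) volume a b :=
    (intervalIntegrable_iff_integrableOn_Ioc_of_le hab).2 hg.integrable_sq
  have hqf : IntervalIntegrable (fun x ↦ q x * f x ^ 2) volume a b :=
    ContinuousOn.intervalIntegrable (by fun_prop)
  set D : ℝ → ℝ := fun x ↦ (-q x - A x ^ 2) * f x ^ 2 + g x * (2 * A x * f x) with hD
  have hD_int : IntervalIntegrable D volume a b :=
    (ContinuousOn.intervalIntegrable (by fun_prop)).add (hg_int.mul_continuousOn (by fun_prop))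
  have hD_deriv : ∀ x ∈ Ioo a b \ s, HasDerivAt (fun x ↦ A x * f x ^ 2) (D x) x := fun x hx ↦
    ((hAq x hx).mul ((hfg x hx).pow 2)).congr_deriv (by simp [hD]; ring)
  have hD_eq : ∫ x in a..b, D x = A b * f b ^ 2 - A a * f a ^ 2 :=
    integral_eq_of_hasDerivAt_off_countable_of_le _ D hab hs
      (by rw [← uIcc_of_le hab]; fun_prop) hD_deriv hD_int
  -- Completing the square: `g² - q f² - (A f²)' = (g - A f)²`.
  have h_sq : 0 ≤ ∫ x in a..b, (g x ^ 2 - q x * f x ^ 2 - D x) :=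
    intervalIntegral.integral_nonneg hab fun x _ ↦ by
      simp only [hD]
      linarith [sq_nonneg (g x - A x * f x)]
  rw [intervalIntegral.integral_sub (hg_sq.sub hqf) hD_int,
    intervalIntegral.integral_sub hg_sq hqf, hD_eq] at h_sq
  linarith

theorem hasDerivAt_mul_cot_mul_add {κ δ x : ℝ} (hx : sin (κ * x + δ) ≠ 0) :
    HasDerivAt (fun x ↦ κ * cot (κ * x + δ)) (-κ ^ 2 - (κ * cot (κ * x + δ)) ^ 2) x := by
  have h_lin : HasDerivAt (fun x ↦ κ * x + δ) κ x := by
    simpa using ((hasDerivAt_id x).const_mul κ).add_const δ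
  simp only [cot_eq_cos_div_sin]
  refine ((h_lin.cos.div h_lin.sin hx).const_mul κ).congr_deriv ?_
  field_simp

section Segment

variable {h κ : ℝ} {s : Set ℝ} {f g : ℝ → ℝ}

theorem sq_mul_integral_sq_le_of_shift (hh : 0 ≤ h) (hs : s.Countable)
    (hf : ContinuousOn f (Icc 0 h)) (hfg : ∀ x ∈ Ioo 0 h \ s, HasDerivAt f (g x) x)
    (hg : MemLp g 2 (volume.restrict (Ioc 0 h))) (hf₀ : f 0 = 0)
    (hκ : 0 ≤ κ) {δ : ℝ} (hδ : 0 < δ) (hδπ : κ * h + δ < π) :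
    κ ^ 2 * ∫ x in 0..h, f x ^ 2 ≤
      (∫ x in 0..h, g x ^ 2) - κ * cot (κ * h + δ) * f h ^ 2 := by
  have h_sin : ∀ x ∈ Icc 0 h, sin (κ * x + δ) ≠ 0 := fun x hx ↦
    (sin_pos_of_pos_of_lt_pi (by nlinarith [hx.1]) (by nlinarith [hx.2])).ne'
  have h_deriv := fun x hx ↦ hasDerivAt_mul_cot_mul_add (h_sin x hx)
  have h_riccati := integral_mul_sq_le_of_riccati hh hs hf hfg hg
    (fun x hx ↦ (h_deriv x hx).continuousAt.continuousWithinAt)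
    (fun x hx ↦ h_deriv x (Ioo_subset_Icc_self hx.1)) continuousOn_const
  simpa [hf₀] using h_riccati

/- The Riccati solution `κ cot (κ x)` is singular at `0`, so it is reached as the limit of its
shifts. -/
theorem sq_mul_integral_sq_le_sub_cot (hh : 0 < h) (hs : s.Countable)
    (hf : ContinuousOn f (Icc 0 h)) (hfg : ∀ x ∈ Ioo 0 h \ s, HasDerivAt f (g x) x)
    (hg : MemLp g 2 (volume.restrict (Ioc 0 h))) (hf₀ : f 0 = 0)
    (hκ : 0 < κ) (hκπ : κ * h < π) :
    κ ^ 2 * ∫ x in 0..h, f x ^ 2 ≤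
      (∫ x in 0..h, g x ^ 2) - κ * cot (κ * h) * f h ^ 2 := by
  have h_sin : sin (κ * h + 0) ≠ 0 := by
    simpa using (sin_pos_of_pos_of_lt_pi (by positivity) hκπ).ne'
  have h_cot : ContinuousAt (fun δ ↦ cot (κ * h + δ)) 0 := by
    simp only [cot_eq_cos_div_sin]
    exact ContinuousAt.div (by fun_prop) (by fun_prop) h_sin
  have h_lim : Tendsto (fun δ ↦ (∫ x in 0..h, g x ^ 2) - κ * cot (κ * h + δ) * f h ^ 2)
      (𝓝[>] 0) (𝓝 ((∫ x in 0..h, g x ^ 2) - κ * cot (κ * h) * f h ^ 2)) := by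
    have h_tendsto := ((h_cot.tendsto.const_mul κ).mul_const (f h ^ 2)).const_sub
      (∫ x in 0..h, g x ^ 2)
    simpa using h_tendsto.mono_left nhdsWithin_le_nhds
  refine ge_of_tendsto h_lim ?_
  filter_upwards [Ioo_mem_nhdsGT (sub_pos.2 hκπ)] with δ hδ
  exact sq_mul_integral_sq_le_of_shift hh.le hs hf hfg hg hf₀ hκ.le hδ.1 (by linarith [hδ.2])

end Segment

theorem ae_memLp_two_slice {α β : Type*} [MeasurableSpace α] [MeasurableSpace β]
    {μ : Measure α} {ν : Measure β} [SFinite μ] [SFinite ν] {G : α × β → ℝ}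
    (hG : MemLp G 2 (μ.prod ν)) : ∀ᵐ y ∂ν, MemLp (fun x ↦ G (x, y)) 2 μ := by
  filter_upwards [hG.aestronglyMeasurable.prodMk_right, hG.integrable_sq.prod_left_ae]
    with y h_meas h_sq
  exact (memLp_two_iff_integrable_sq h_meas).2 h_sq

theorem mul_le_two_mul_integral_sq_of_dual {α : Type*} [MeasurableSpace α] {μ : Measure α}
    {G Φ : α → ℝ} (hG : MemLp G 2 μ) (hΦ : MemLp Φ 2 μ) {c I : ℝ} (hc : 0 ≤ c)
    (hI : ∫ p, G p * Φ p ∂μ = -I) (hΦI : c * ∫ p, Φ p ^ 2 ∂μ ≤ 2 * I) :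
    c * I ≤ 2 * ∫ p, G p ^ 2 ∂μ := by
  have h_expand : ∫ p, (G p + c / 2 * Φ p) ^ 2 ∂μ =
      (∫ p, G p ^ 2 ∂μ) + c * (∫ p, G p * Φ p ∂μ) + c ^ 2 / 4 * ∫ p, Φ p ^ 2 ∂μ := by
    have h_mul : Integrable (fun p ↦ G p * Φ p) μ := hG.integrable_mul hΦ
    have hG_sq := hG.integrable_sq
    have hΦ_sq := hΦ.integrable_sq
    rw [← integral_const_mul, ← integral_const_mul, ← integral_add, ← integral_add]
    · congr 1 with p
      ring
    all_goals fun_prop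
  have h_nonneg : 0 ≤ ∫ p, (G p + c / 2 * Φ p) ^ 2 ∂μ := integral_nonneg fun p ↦ sq_nonneg _
  rw [h_expand, hI] at h_nonneg
  linarith [mul_le_mul_of_nonneg_left hΦI hc]

/-- The mean of `U (x, ·)`, as a function of `x`. -/
noncomputable def rowAverage {α : Type*} [MeasurableSpace α] (μ : Measure α) (U : α × α → ℝ)
    (x : α) : ℝ :=
  ⨍ y, U (x, y) ∂μ

/-- A symmetric kernel `U` modified by its row averages so that `∫ x, twist μ U (x, y) ∂μ` does
not depend on `y`. -/
noncomputable def twist {α : Type*} [MeasurableSpace α] (μ : Measure α) (U : α × α → ℝ)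
    (p : α × α) : ℝ :=
  U p + rowAverage μ U p.1 - rowAverage μ U p.2

section SymmetricKernel

variable {α : Type*} [MeasurableSpace α] {μ : Measure α} [IsFiniteMeasure μ] {U : α × α → ℝ}

theorem integral_row_eq (U : α × α → ℝ) (x : α) :
    ∫ y, U (x, y) ∂μ = μ.real univ * rowAverage μ U x :=
  (measure_smul_average μ fun y ↦ U (x, y)).symm

theorem integral_mul_rowAverage_fst (hU : MemLp U 2 (μ.prod μ))
    (hm : MemLp (rowAverage μ U) 2 μ) :
    ∫ p, U p * rowAverage μ U p.1 ∂μ.prod μ =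
      μ.real univ * ∫ x, rowAverage μ U x ^ 2 ∂μ := by
  have h_int : Integrable (fun p ↦ U p * rowAverage μ U p.1) (μ.prod μ) :=
    hU.integrable_mul (hm.comp_fst μ)
  rw [integral_prod _ h_int, ← integral_const_mul]
  refine integral_congr_ae (.of_forall fun x ↦ ?_)
  simp only [integral_mul_const, integral_row_eq]
  ring

theorem integral_mul_rowAverage_snd (hU : MemLp U 2 (μ.prod μ))
    (hsymm : ∀ p, U p.swap = U p) (hm : MemLp (rowAverage μ U) 2 μ) :
    ∫ p, U p * rowAverage μ U p.2 ∂μ.prod μ =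
      μ.real univ * ∫ x, rowAverage μ U x ^ 2 ∂μ := by
  rw [← integral_mul_rowAverage_fst hU hm, ← integral_prod_swap]
  simp only [hsymm, Prod.snd_swap]

theorem integral_twist_column (hsymm : ∀ p, U p.swap = U p) {y : α}
    (hU : Integrable (fun x ↦ U (x, y)) μ) (hm : Integrable (rowAverage μ U) μ) :
    ∫ x, twist μ U (x, y) ∂μ = ∫ x, rowAverage μ U x ∂μ := by
  have h_col : ∫ x, U (x, y) ∂μ = μ.real univ * rowAverage μ U y := by
    rw [← integral_row_eq]
    exact integral_congr_ae (.of_forall fun x ↦ hsymm (y, x))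
  simp only [twist]
  rw [integral_sub (hU.fun_add hm) (integrable_const _), integral_add hU hm, h_col,
    integral_const, smul_eq_mul]
  ring

theorem integral_mul_twist (hU : MemLp U 2 (μ.prod μ)) (hsymm : ∀ p, U p.swap = U p)
    (hm : MemLp (rowAverage μ U) 2 μ) :
    ∫ p, U p * twist μ U p ∂μ.prod μ = ∫ p, U p ^ 2 ∂μ.prod μ := by
  have h_fst : Integrable (fun p ↦ U p * rowAverage μ U p.1) (μ.prod μ) :=
    hU.integrable_mul (hm.comp_fst μ)
  have h_snd : Integrable (fun p ↦ U p * rowAverage μ U p.2) (μ.prod μ) :=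
    hU.integrable_mul (hm.comp_snd μ)
  calc ∫ p, U p * twist μ U p ∂μ.prod μ
      = ∫ p, (U p ^ 2 + U p * rowAverage μ U p.1 - U p * rowAverage μ U p.2) ∂μ.prod μ := by
        congr 1 with p
        simp only [twist]
        ring
    _ = ∫ p, U p ^ 2 ∂μ.prod μ := by
        have hU_sq := hU.integrable_sq
        rw [integral_sub, integral_add, integral_mul_rowAverage_fst hU hm,
          integral_mul_rowAverage_snd hU hsymm hm]
        · ring
        all_goals fun_prop

theorem integral_eq_mul_integral_rowAverage (hU : Integrable U (μ.prod μ)) :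
    ∫ p, U p ∂μ.prod μ = μ.real univ * ∫ x, rowAverage μ U x ∂μ := by
  simp only [integral_prod _ hU, ← integral_const_mul, integral_row_eq]

theorem integral_sub_rowAverage_sub_rowAverage (hU : Integrable U (μ.prod μ))
    (hm : Integrable (rowAverage μ U) μ) :
    ∫ p, (U p - rowAverage μ U p.1 - rowAverage μ U p.2) ∂μ.prod μ =
      -(μ.real univ * ∫ x, rowAverage μ U x ∂μ) := by
  have hm₁ : Integrable (fun p : α × α ↦ rowAverage μ U p.1) (μ.prod μ) := hm.comp_fst μ
  have hm₂ : Integrable (fun p : α × α ↦ rowAverage μ U p.2) (μ.prod μ) := hm.comp_snd μ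
  rw [integral_sub (by exact hU.sub hm₁) hm₂, integral_sub hU hm₁,
    integral_eq_mul_integral_rowAverage hU, integral_fun_fst, integral_fun_snd, smul_eq_mul]
  ring

theorem integral_sq_add_rowAverage_sq_sub_mul (hU : MemLp U 2 (μ.prod μ))
    (hsymm : ∀ p, U p.swap = U p) (hm : MemLp (rowAverage μ U) 2 μ) :
    ∫ p, (U p ^ 2 + rowAverage μ U p.1 ^ 2 + rowAverage μ U p.2 ^ 2
        - 2 * (U p * rowAverage μ U p.2)) ∂μ.prod μ =
      ∫ p, U p ^ 2 ∂μ.prod μ := by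
  have hU_sq := hU.integrable_sq
  have hm₁_sq := (hm.comp_fst μ).integrable_sq
  have hm₂_sq := (hm.comp_snd μ).integrable_sq
  have h_mul : Integrable (fun p ↦ U p * rowAverage μ U p.2) (μ.prod μ) :=
    hU.integrable_mul (hm.comp_snd μ)
  rw [integral_sub ((hU_sq.fun_add hm₁_sq).fun_add hm₂_sq) (h_mul.const_mul 2),
    integral_add (hU_sq.fun_add hm₁_sq) hm₂_sq, integral_add hU_sq hm₁_sq, integral_const_mul,
    integral_mul_rowAverage_snd hU hsymm hm, integral_fun_fst (fun x ↦ rowAverage μ U x ^ 2),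
    integral_fun_snd (fun x ↦ rowAverage μ U x ^ 2), smul_eq_mul]
  ring

theorem integral_twist_sq_add_integral_sq (hU : MemLp U 2 (μ.prod μ))
    (hsymm : ∀ p, U p.swap = U p) (hm : MemLp (rowAverage μ U) 2 μ) :
    (∫ p, twist μ U p ^ 2 ∂μ.prod μ) +
        ∫ p, (U p - rowAverage μ U p.1 - rowAverage μ U p.2 + ⨍ x, rowAverage μ U x ∂μ) ^ 2
          ∂μ.prod μ =
      2 * (∫ p, U p ^ 2 ∂μ.prod μ) - (∫ x, rowAverage μ U x ∂μ) ^ 2 := by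
  have h_quad := integral_sq_add_rowAverage_sq_sub_mul hU hsymm hm
  have h_lin := integral_sub_rowAverage_sub_rowAverage (hU.integrable one_le_two)
    (hm.integrable one_le_two)
  have h_average : μ.real univ * ⨍ x, rowAverage μ U x ∂μ = ∫ x, rowAverage μ U x ∂μ :=
    measure_smul_average μ _
  have h_univ : (μ.prod μ).real univ = μ.real univ ^ 2 := by
    rw [← univ_prod_univ, measureReal_prod_prod, sq]
  simp only [twist]
  generalize rowAverage μ U = m at *
  generalize ⨍ x, m x ∂μ = e at *
  have hm₁ : MemLp (fun p : α × α ↦ m p.1) 2 (μ.prod μ) := hm.comp_fst μ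
  have hm₂ : MemLp (fun p : α × α ↦ m p.2) 2 (μ.prod μ) := hm.comp_snd μ
  have h_twist_int : Integrable (fun p ↦ (U p + m p.1 - m p.2) ^ 2) (μ.prod μ) :=
    ((hU.add hm₁).sub hm₂).integrable_sq
  have h_rest_int : Integrable (fun p ↦ (U p - m p.1 - m p.2 + e) ^ 2) (μ.prod μ) :=
    (((hU.sub hm₁).sub hm₂).add (memLp_const e)).integrable_sq
  have h_lin_int : Integrable (fun p ↦ 2 * e * (U p - m p.1 - m p.2)) (μ.prod μ) :=
    (((hU.sub hm₁).sub hm₂).integrable one_le_two).const_mul (2 * e)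
  have h_quad_int : Integrable (fun p ↦ 2 * (U p ^ 2 + m p.1 ^ 2 + m p.2 ^ 2
      - 2 * (U p * m p.2))) (μ.prod μ) :=
    (((hU.integrable_sq.add hm₁.integrable_sq).add hm₂.integrable_sq).sub
      ((hU.integrable_mul hm₂).const_mul 2)).const_mul 2
  calc (∫ p, (U p + m p.1 - m p.2) ^ 2 ∂μ.prod μ) +
        ∫ p, (U p - m p.1 - m p.2 + e) ^ 2 ∂μ.prod μ
      = ∫ p, (2 * (U p ^ 2 + m p.1 ^ 2 + m p.2 ^ 2 - 2 * (U p * m p.2))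
          + 2 * e * (U p - m p.1 - m p.2) + e ^ 2) ∂μ.prod μ := by
        rw [← integral_add h_twist_int h_rest_int]
        congr 1 with p
        ring
    _ = 2 * (∫ p, U p ^ 2 ∂μ.prod μ) - (∫ x, m x ∂μ) ^ 2 := by
        rw [integral_add (h_quad_int.fun_add h_lin_int) (integrable_const _),
          integral_add h_quad_int h_lin_int, integral_const_mul, integral_const_mul,
          integral_const, h_quad, h_lin, h_univ, ← h_average, smul_eq_mul]
        ring

theorem integral_twist_sq_add_sq_le (hU : MemLp U 2 (μ.prod μ)) (hsymm : ∀ p, U p.swap = U p)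
    (hm : MemLp (rowAverage μ U) 2 μ) :
    (∫ p, twist μ U p ^ 2 ∂μ.prod μ) + (∫ x, rowAverage μ U x ∂μ) ^ 2 ≤
      2 * ∫ p, U p ^ 2 ∂μ.prod μ := by
  have h_eq := integral_twist_sq_add_integral_sq hU hsymm hm
  have h_nonneg : 0 ≤ ∫ p, (U p - rowAverage μ U p.1 - rowAverage μ U p.2 +
      ⨍ x, rowAverage μ U x ∂μ) ^ 2 ∂μ.prod μ := integral_nonneg fun p ↦ sq_nonneg _
  linarith

end SymmetricKernel

theorem memLp_restrict_of_continuous {X E : Type*} [TopologicalSpace X]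
    [SecondCountableTopology X] [MeasurableSpace X] [OpensMeasurableSpace X]
    [NormedAddCommGroup E] {μ : Measure X} [IsFiniteMeasureOnCompacts μ] {F : X → E}
    (hF : Continuous F) {s k : Set X} (hk : IsCompact k) (hs : MeasurableSet s) (hsk : s ⊆ k)
    (p : ENNReal) : MemLp F p (μ.restrict s) := by
  have : IsFiniteMeasure (μ.restrict s) :=
    isFiniteMeasure_restrict.2 (ne_top_of_le_ne_top hk.measure_ne_top (measure_mono hsk))
  obtain ⟨C, hC⟩ := hk.exists_bound_of_continuousOn hF.continuousOn
  refine .of_bound hF.aestronglyMeasurable C ?_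
  filter_upwards [ae_restrict_mem hs] with x hx using hC x (hsk hx)

/-- Lebesgue measure on the segment `(0, h]`. -/
noncomputable abbrev segmentMeasure (h : ℝ) : Measure ℝ :=
  volume.restrict (Ioc 0 h)

/-- Lebesgue measure on the square `(0, h]²`. -/
noncomputable abbrev squareMeasure (h : ℝ) : Measure (ℝ × ℝ) :=
  (segmentMeasure h).prod (segmentMeasure h)

/-- The primitive of `K` along the first coordinate which vanishes on the axis `x = 0`. -/
noncomputable def columnPrimitive (K : ℝ × ℝ → ℝ) (p : ℝ × ℝ) : ℝ :=
  ∫ s in 0..p.1, K (s, p.2)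

section Square

variable {h κ : ℝ} {U V G H K : ℝ × ℝ → ℝ}

theorem squareMeasure_eq_restrict (h : ℝ) :
    squareMeasure h = volume.restrict (Ioc 0 h ×ˢ Ioc 0 h) :=
  Measure.prod_restrict _ _

theorem integral_segmentMeasure (hh : 0 ≤ h) (f : ℝ → ℝ) :
    ∫ x, f x ∂segmentMeasure h = ∫ x in 0..h, f x :=
  (intervalIntegral.integral_of_le hh).symm

theorem memLp_segmentMeasure {f : ℝ → ℝ} (hf : Continuous f) (p : ENNReal) :
    MemLp f p (segmentMeasure h) :=
  memLp_restrict_of_continuous hf isCompact_Icc measurableSet_Ioc Ioc_subset_Icc_self p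

theorem memLp_squareMeasure (hV : Continuous V) (p : ENNReal) :
    MemLp V p (squareMeasure h) := by
  rw [squareMeasure_eq_restrict]
  exact memLp_restrict_of_continuous hV (isCompact_Icc.prod isCompact_Icc)
    (measurableSet_Ioc.prod measurableSet_Ioc) (prod_mono Ioc_subset_Icc_self Ioc_subset_Icc_self) p

theorem sq_mul_integral_square_sq_le_sub_cot (hh : 0 < h) (hV : Continuous V)
    (hVH : ∀ y, ∀ x ≠ y, HasDerivAt (fun x ↦ V (x, y)) (H (x, y)) x)
    (hH : MemLp H 2 (squareMeasure h)) (hV₀ : ∀ y ∈ Ioc 0 h, V (0, y) = 0)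
    (hκ : 0 < κ) (hκπ : κ * h < π) :
    κ ^ 2 * ∫ p, V p ^ 2 ∂squareMeasure h ≤
      (∫ p, H p ^ 2 ∂squareMeasure h) - κ * cot (κ * h) * ∫ y in 0..h, V (h, y) ^ 2 := by
  have hV_sq : Integrable (fun p ↦ V p ^ 2) (squareMeasure h) :=
    (memLp_squareMeasure hV 2).integrable_sq
  have hV_edge : Integrable (fun y ↦ V (h, y) ^ 2) (segmentMeasure h) :=
    (memLp_segmentMeasure (by fun_prop) 2).integrable_sq
  rw [integral_prod_symm _ hV_sq, integral_prod_symm _ hH.integrable_sq,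
    ← integral_segmentMeasure hh.le, ← integral_const_mul, ← integral_const_mul,
    ← integral_sub hH.integrable_sq.integral_prod_right (hV_edge.const_mul _)]
  refine integral_mono_ae (hV_sq.integral_prod_right.const_mul _)
    (hH.integrable_sq.integral_prod_right.sub (hV_edge.const_mul _)) ?_
  filter_upwards [ae_memLp_two_slice hH, ae_restrict_mem measurableSet_Ioc] with y hHy hy
  simpa only [integral_segmentMeasure hh.le] using
    sq_mul_integral_sq_le_sub_cot hh (countable_singleton y) (by fun_prop)
      (fun x hx ↦ hVH y x hx.2) hHy (hV₀ y hy) hκ hκπ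

theorem integral_square_deriv_mul_add_mul_deriv (hh : 0 ≤ h) (hU : Continuous U)
    (hV : Continuous V) (hUG : ∀ y, ∀ x ≠ y, HasDerivAt (fun x ↦ U (x, y)) (G (x, y)) x)
    (hVH : ∀ y, ∀ x ≠ y, HasDerivAt (fun x ↦ V (x, y)) (H (x, y)) x)
    (hG : MemLp G 2 (squareMeasure h)) (hH : MemLp H 2 (squareMeasure h)) :
    (∫ p, G p * V p ∂squareMeasure h) + ∫ p, U p * H p ∂squareMeasure h =
      ∫ y in 0..h, (U (h, y) * V (h, y) - U (0, y) * V (0, y)) := by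
  have hGV : Integrable (fun p ↦ G p * V p) (squareMeasure h) :=
    hG.integrable_mul (memLp_squareMeasure hV 2)
  have hUH : Integrable (fun p ↦ U p * H p) (squareMeasure h) :=
    (memLp_squareMeasure hU 2).integrable_mul hH
  have h_sum := hGV.fun_add hUH
  rw [← integral_add hGV hUH, integral_prod_symm _ h_sum, ← integral_segmentMeasure hh]
  refine integral_congr_ae ?_
  filter_upwards [h_sum.prod_left_ae] with y hy
  rw [integral_segmentMeasure hh]
  exact integral_eq_of_hasDerivAt_off_countable_of_le _ _ hh (countable_singleton y)
    (by fun_prop) (fun x hx ↦ (hUG y x hx.2).mul (hVH y x hx.2))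
    ((intervalIntegrable_iff_integrableOn_Ioc_of_le hh).2 hy)

theorem continuous_columnPrimitive (hK : Continuous K) : Continuous (columnPrimitive K) :=
  intervalIntegral.continuous_parametric_intervalIntegral_of_continuous
    (f := fun (p : ℝ × ℝ) s ↦ K (s, p.2)) (by simp only [Function.uncurry_def]; fun_prop)
    continuous_fst

theorem hasDerivAt_columnPrimitive (hK : Continuous K) (x y : ℝ) :
    HasDerivAt (fun x ↦ columnPrimitive K (x, y)) (K (x, y)) x := by
  have h_col : Continuous fun s ↦ K (s, y) := by fun_prop
  exact h_col.integral_hasStrictDerivAt 0 x |>.hasDerivAt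

theorem continuous_rowAverage_segmentMeasure (hh : 0 ≤ h) (hU : Continuous U) :
    Continuous (rowAverage (segmentMeasure h) U) := by
  unfold rowAverage
  simp only [average_eq, integral_segmentMeasure hh]
  fun_prop

theorem continuous_twist_segmentMeasure (hh : 0 ≤ h) (hU : Continuous U) :
    Continuous (twist (segmentMeasure h) U) := by
  have hm := continuous_rowAverage_segmentMeasure hh hU
  unfold twist
  fun_prop

theorem columnPrimitive_twist_segmentMeasure (hh : 0 ≤ h) (hU : Continuous U)
    (hsymm : ∀ p, U p.swap = U p) (y : ℝ) :
    columnPrimitive (twist (segmentMeasure h) U) (h, y) =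
      ∫ x, rowAverage (segmentMeasure h) U x ∂segmentMeasure h := by
  rw [columnPrimitive, ← integral_segmentMeasure hh]
  exact integral_twist_column hsymm
    (memLp_one_iff_integrable.1 (memLp_segmentMeasure (by fun_prop) 1))
    (memLp_one_iff_integrable.1
      (memLp_segmentMeasure (continuous_rowAverage_segmentMeasure hh hU) 1))

/- Testing against `Φ = columnPrimitive (twist U)` trades `∫ U²` for `-∫ ∂ₓU Φ`: the boundary term
drops out because `Φ` is constant on the edge `x = h`, where `U` has mean zero. -/
theorem sq_mul_integral_square_sq_le_of_symmetric (hh : 0 < h) (hU : Continuous U)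
    (hsymm : ∀ p, U p.swap = U p)
    (hUG : ∀ y, ∀ x ≠ y, HasDerivAt (fun x ↦ U (x, y)) (G (x, y)) x)
    (hG : MemLp G 2 (squareMeasure h)) (hmean : ∫ y in 0..h, U (h, y) = 0)
    (hκ : 0 < κ) (hκπ : κ * h < π) (hcot : 0 ≤ κ * h * cot (κ * h) + 1) :
    κ ^ 2 * ∫ p, U p ^ 2 ∂squareMeasure h ≤ 2 * ∫ p, G p ^ 2 ∂squareMeasure h := by
  set K := twist (segmentMeasure h) U
  set Φ := columnPrimitive K
  set c := ∫ x, rowAverage (segmentMeasure h) U x ∂segmentMeasure h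
  have hK : Continuous K := continuous_twist_segmentMeasure hh.le hU
  have hΦ : Continuous Φ := continuous_columnPrimitive hK
  have hΦK : ∀ y, ∀ x ≠ y, HasDerivAt (fun x ↦ Φ (x, y)) (K (x, y)) x :=
    fun y x _ ↦ hasDerivAt_columnPrimitive hK x y
  have hΦ_left : ∀ y, Φ (0, y) = 0 := fun y ↦ intervalIntegral.integral_same
  have hΦ_right : ∀ y, Φ (h, y) = c := columnPrimitive_twist_segmentMeasure hh.le hU hsymm
  have hU_mem : MemLp U 2 (squareMeasure h) := memLp_squareMeasure hU 2
  have hm_mem : MemLp (rowAverage (segmentMeasure h) U) 2 (segmentMeasure h) :=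
    memLp_segmentMeasure (continuous_rowAverage_segmentMeasure hh.le hU) 2
  have hK_mem : MemLp K 2 (squareMeasure h) := memLp_squareMeasure hK 2
  have h_dual : ∫ p, G p * Φ p ∂squareMeasure h = -∫ p, U p ^ 2 ∂squareMeasure h := by
    have h_parts := integral_square_deriv_mul_add_mul_deriv hh.le hU hΦ hUG hΦK hG hK_mem
    simp only [hΦ_left, hΦ_right, mul_zero, sub_zero, intervalIntegral.integral_mul_const, hmean,
      zero_mul, K, integral_mul_twist hU_mem hsymm hm_mem] at h_parts
    linarith
  have h_robin : κ ^ 2 * ∫ p, Φ p ^ 2 ∂squareMeasure h ≤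
      (∫ p, K p ^ 2 ∂squareMeasure h) - κ * cot (κ * h) * (h * c ^ 2) := by
    simpa [hΦ_right] using sq_mul_integral_square_sq_le_sub_cot hh hΦ hΦK hK_mem
      (fun y _ ↦ hΦ_left y) hκ hκπ
  have h_twist := integral_twist_sq_add_sq_le hU_mem hsymm hm_mem
  refine mul_le_two_mul_integral_sq_of_dual hG (memLp_squareMeasure hΦ 2) (sq_nonneg κ) h_dual ?_
  linarith [mul_nonneg hcot (sq_nonneg c)]

end Square

theorem setIntegral_eq_setIntegral_add_comp_involutive {X E : Type*} [MeasurableSpace X]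
    [NormedAddCommGroup E] [NormedSpace ℝ E] {μ : Measure X} {σ : X → X}
    (hσ : MeasurePreserving σ μ μ) (hinv : Function.Involutive σ) {S T : Set X}
    (hT : MeasurableSet T) (hdisj : Disjoint T (σ ⁻¹' T))
    (hST : S =ᵐ[μ] (T ∪ σ ⁻¹' T : Set X)) {F : X → E} (hF : IntegrableOn F S μ) :
    ∫ x in S, F x ∂μ = ∫ x in T, (F x + F (σ x)) ∂μ := by
  have hσ_emb : MeasurableEmbedding σ :=
    (MeasurableEquiv.ofInvolutive σ hinv hσ.measurable).measurableEmbedding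
  rw [integrableOn_congr_set_ae hST, integrableOn_union] at hF
  have hF_comp : IntegrableOn (fun x ↦ F (σ x)) T μ :=
    (hσ.integrableOn_comp_preimage hσ_emb).1 (by simpa only [Function.comp_def, hinv _] using hF.2)
  have h_preimage : ∫ x in σ ⁻¹' T, F x ∂μ = ∫ x in T, F (σ x) ∂μ := by
    simpa only [hinv _] using hσ.setIntegral_preimage_emb hσ_emb (fun x ↦ F (σ x)) T
  rw [setIntegral_congr_set hST, setIntegral_union hdisj (hσ.measurable hT) hF.1 hF.2,
    h_preimage, integral_add hF.1 hF_comp]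

/-- The isosceles right triangle `0 < |y| < x < h` without its axis of symmetry. -/
def triangle (h : ℝ) : Set (ℝ × ℝ) :=
  {p | 0 < |p.2| ∧ |p.2| < p.1 ∧ p.1 < h}

/-- The half `0 < y < x < h` of `triangle h`, which is also one half of the square `(0, h)²`. -/
def halfTriangle (h : ℝ) : Set (ℝ × ℝ) :=
  {p | 0 < p.2 ∧ p.2 < p.1 ∧ p.1 < h}

section Folding

variable {h : ℝ} {F : ℝ × ℝ → ℝ}

theorem measurableSet_halfTriangle (h : ℝ) : MeasurableSet (halfTriangle h) :=
  (measurableSet_lt measurable_const measurable_snd).inter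
    ((measurableSet_lt measurable_snd measurable_fst).inter
      (measurableSet_lt measurable_fst measurable_const))

theorem halfTriangle_union_preimage_neg (h : ℝ) :
    halfTriangle h ∪ Prod.map id Neg.neg ⁻¹' halfTriangle h = triangle h := by
  ext ⟨x, y⟩
  simp only [halfTriangle, triangle, mem_union, mem_preimage, mem_ofPred_eq, Prod.map, id]
  grind

theorem integrableOn_triangle (hF : Continuous F) : IntegrableOn F (triangle h) := by
  have h_meas : MeasurableSet (triangle h) := by
    rw [← halfTriangle_union_preimage_neg]
    exact (measurableSet_halfTriangle h).union
      ((measurable_id.prodMap measurable_neg) (measurableSet_halfTriangle h))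
  have h_sub : triangle h ⊆ Icc 0 h ×ˢ Icc (-h) h := fun p ⟨_, h_abs, h_fst⟩ ↦
    ⟨⟨(abs_nonneg _).trans h_abs.le, h_fst.le⟩, abs_le.1 (h_abs.trans h_fst).le⟩
  exact memLp_one_iff_integrable.1
    (memLp_restrict_of_continuous hF (isCompact_Icc.prod isCompact_Icc) h_meas h_sub 1)

theorem integrableOn_halfTriangle (hF : Continuous F) : IntegrableOn F (halfTriangle h) :=
  (integrableOn_triangle hF).mono_set
    (subset_union_left.trans (halfTriangle_union_preimage_neg h).subset)

theorem setIntegral_triangle_eq (hF : Continuous F) :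
    ∫ p in triangle h, F p = ∫ p in halfTriangle h, (F p + F (p.1, -p.2)) := by
  refine setIntegral_eq_setIntegral_add_comp_involutive
    (σ := Prod.map id Neg.neg)
    ((MeasurePreserving.id volume).prod (Measure.measurePreserving_neg volume))
    (fun p ↦ Prod.ext rfl (neg_neg p.2)) (measurableSet_halfTriangle h) ?_
    (halfTriangle_union_preimage_neg h).symm.eventuallyEq (integrableOn_triangle hF)
  refine disjoint_left.2 fun p hp hp_neg ↦ ?_
  simp only [halfTriangle, mem_preimage, mem_ofPred_eq, Prod.map, id] at hp hp_neg
  linarith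

theorem ae_fst_ne_snd : ∀ᵐ p : ℝ × ℝ, p.1 ≠ p.2 := by
  have h_meas : MeasurableSet {p : ℝ × ℝ | ¬p.1 ≠ p.2} := by
    simpa using measurableSet_eq_fun measurable_fst measurable_snd
  rw [ae_iff, Measure.volume_eq_prod, Measure.measure_prod_null h_meas]
  exact .of_forall fun x ↦ by simp [preimage]

theorem square_ae_eq_halfTriangle_union (h : ℝ) :
    (Ioo 0 h ×ˢ Ioo 0 h : Set (ℝ × ℝ)) =ᵐ[volume]
      (halfTriangle h ∪ Prod.swap ⁻¹' halfTriangle h : Set (ℝ × ℝ)) := by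
  refine eventuallyEq_set.2 ?_
  filter_upwards [ae_fst_ne_snd] with p hp
  simp only [halfTriangle, mem_prod, mem_Ioo, mem_union, mem_preimage, mem_ofPred_eq,
    Prod.fst_swap, Prod.snd_swap]
  grind

theorem integral_squareMeasure_eq (hF : Integrable F (squareMeasure h)) :
    ∫ p, F p ∂squareMeasure h = ∫ p in halfTriangle h, (F p + F p.swap) := by
  have h_square : squareMeasure h = volume.restrict (Ioo 0 h ×ˢ Ioo 0 h) := by
    rw [squareMeasure, segmentMeasure, ← restrict_Ioo_eq_restrict_Ioc]
    exact Measure.prod_restrict _ _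
  rw [h_square] at hF ⊢
  refine setIntegral_eq_setIntegral_add_comp_involutive Measure.measurePreserving_swap
    Prod.swap_swap (measurableSet_halfTriangle h) ?_ (square_ae_eq_halfTriangle_union h) hF
  refine disjoint_left.2 fun p hp hp_swap ↦ ?_
  simp only [halfTriangle, mem_preimage, mem_ofPred_eq, Prod.fst_swap, Prod.snd_swap] at hp hp_swap
  linarith

end Folding

/-- The squared Euclidean length of the gradient of `u`, written with partial derivatives because
`ℝ × ℝ` carries the sup norm. -/
noncomputable def gradSq (u : ℝ × ℝ → ℝ) (p : ℝ × ℝ) : ℝ :=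
  fderiv ℝ u p (1, 0) ^ 2 + fderiv ℝ u p (0, 1) ^ 2

/-- The extension of `u` from the half plane `y ≤ x` to a symmetric function on the plane. -/
noncomputable def symmetrize (u : ℝ × ℝ → ℝ) (p : ℝ × ℝ) : ℝ :=
  u (max p.1 p.2, min p.1 p.2)

/-- The partial derivative of `symmetrize u` in the first variable, away from the diagonal. -/
noncomputable def symmetrizeDeriv (u : ℝ × ℝ → ℝ) (p : ℝ × ℝ) : ℝ :=
  if p.1 < p.2 then fderiv ℝ u p.swap (0, 1) else fderiv ℝ u p (1, 0)

section Symmetrize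

variable {h : ℝ} {u : ℝ × ℝ → ℝ}

theorem symmetrize_swap (u : ℝ × ℝ → ℝ) (p : ℝ × ℝ) : symmetrize u p.swap = symmetrize u p := by
  simp only [symmetrize, Prod.fst_swap, Prod.snd_swap, max_comm, min_comm]

theorem continuous_symmetrize (hu : Continuous u) : Continuous (symmetrize u) := by
  unfold symmetrize
  fun_prop

theorem hasDerivAt_symmetrize (hu : Differentiable ℝ u) (y : ℝ) :
    ∀ x ≠ y, HasDerivAt (fun x ↦ symmetrize u (x, y)) (symmetrizeDeriv u (x, y)) x := by
  intro x hxy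
  rcases hxy.lt_or_gt with h_lt | h_gt
  · have h_snd : HasDerivAt (fun x ↦ u (y, x)) (fderiv ℝ u (y, x) (0, 1)) x :=
      (hu (y, x)).hasFDerivAt.comp_hasDerivAt x ((hasDerivAt_const x y).prodMk (hasDerivAt_id x))
    simp only [symmetrizeDeriv, h_lt, if_true, Prod.swap_prod_mk]
    refine h_snd.congr_of_eventuallyEq ?_
    filter_upwards [Iio_mem_nhds h_lt] with s hs
    simp only [symmetrize, max_eq_right (mem_Iio.1 hs).le, min_eq_left (mem_Iio.1 hs).le]
  · have h_fst : HasDerivAt (fun x ↦ u (x, y)) (fderiv ℝ u (x, y) (1, 0)) x :=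
      (hu (x, y)).hasFDerivAt.comp_hasDerivAt x ((hasDerivAt_id x).prodMk (hasDerivAt_const x y))
    simp only [symmetrizeDeriv, h_gt.not_gt, if_false]
    refine h_fst.congr_of_eventuallyEq ?_
    filter_upwards [Ioi_mem_nhds h_gt] with s hs
    simp only [symmetrize, max_eq_left (mem_Ioi.1 hs).le, min_eq_right (mem_Ioi.1 hs).le]

theorem memLp_symmetrizeDeriv (hu : ContDiff ℝ 1 u) :
    MemLp (symmetrizeDeriv u) 2 (squareMeasure h) := by
  have h_meas : MeasurableSet {p : ℝ × ℝ | p.1 < p.2} :=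
    measurableSet_lt measurable_fst measurable_snd
  classical
  have h_piecewise : symmetrizeDeriv u = {p : ℝ × ℝ | p.1 < p.2}.piecewise
      (fun p ↦ fderiv ℝ u p.swap (0, 1)) (fun p ↦ fderiv ℝ u p (1, 0)) := by
    ext p
    simp only [symmetrizeDeriv, piecewise, mem_ofPred_eq]
  rw [h_piecewise]
  exact MemLp.piecewise h_meas
    ((memLp_squareMeasure (V := fun p ↦ fderiv ℝ u p.swap (0, 1)) (by fun_prop) 2).restrict _)
    ((memLp_squareMeasure (V := fun p ↦ fderiv ℝ u p (1, 0)) (by fun_prop) 2).restrict _)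

theorem integral_symmetrize_sq (hu : Continuous u) :
    ∫ p, symmetrize u p ^ 2 ∂squareMeasure h = 2 * ∫ p in halfTriangle h, u p ^ 2 := by
  rw [integral_squareMeasure_eq (memLp_squareMeasure (continuous_symmetrize hu) 2).integrable_sq,
    ← integral_const_mul]
  refine setIntegral_congr_fun (measurableSet_halfTriangle h) fun p hp ↦ ?_
  have h_symm : symmetrize u p = u p := by
    rw [symmetrize, max_eq_left hp.2.1.le, min_eq_right hp.2.1.le]
  simp only [symmetrize_swap, h_symm]
  ring

theorem integral_symmetrizeDeriv_sq (hu : ContDiff ℝ 1 u) :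
    ∫ p, symmetrizeDeriv u p ^ 2 ∂squareMeasure h = ∫ p in halfTriangle h, gradSq u p := by
  rw [integral_squareMeasure_eq (memLp_symmetrizeDeriv hu).integrable_sq]
  refine setIntegral_congr_fun (measurableSet_halfTriangle h) fun p hp ↦ ?_
  simp [symmetrizeDeriv, gradSq, hp.2.1, hp.2.1.not_gt]

end Symmetrize

theorem mul_cos_add_sin_eq_mul_cot_add_one_mul_sin {z : ℝ} (hz : sin z ≠ 0) :
    z * cos z + sin z = (z * cot z + 1) * sin z := by
  rw [cot_eq_cos_div_sin]
  field_simp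

theorem lt_two_mul_pi_div_three_of_mul_cot_nonneg {z : ℝ} (hz : 0 < z) (hzπ : z < π)
    (hcot : 0 ≤ z * cot z + 1) : z < 2 * π / 3 := by
  by_contra! h_ge
  have h_sin : 0 < sin z := sin_pos_of_pos_of_lt_pi hz hzπ
  have h_cos : cos z ≤ -(1 / 2) := by
    calc cos z ≤ cos (π - π / 3) :=
          cos_le_cos_of_nonneg_of_le_pi (by linarith [pi_pos]) hzπ.le (by linarith)
      _ = -(1 / 2) := by rw [cos_pi_sub, cos_pi_div_three]
  have h_nonneg : 0 ≤ z * cos z + sin z := by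
    rw [mul_cos_add_sin_eq_mul_cot_add_one_mul_sin h_sin.ne']
    positivity
  nlinarith [sin_le_one z, pi_gt_three]

theorem intervalIntegral_add_comp_neg {E : Type*} [NormedAddCommGroup E] [NormedSpace ℝ E]
    {f : ℝ → E} (hf : Continuous f) (a : ℝ) :
    ∫ t in 0..a, (f t + f (-t)) = ∫ t in (-a)..a, f t := by
  rw [intervalIntegral.integral_add (hf.intervalIntegrable _ _)
      (Continuous.intervalIntegrable (by fun_prop) _ _), intervalIntegral.integral_comp_neg,
    neg_zero, add_comm, intervalIntegral.integral_add_adjacent_intervals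
      (hf.intervalIntegrable _ _) (hf.intervalIntegrable _ _)]

section Triangle

variable {h κ : ℝ} {u v : ℝ × ℝ → ℝ}

theorem sq_mul_integral_halfTriangle_sq_le_of_mean_eq_zero (hh : 0 < h) (hu : ContDiff ℝ 1 u)
    (hmean : ∫ y in 0..h, u (h, y) = 0)
    (hκ : 0 < κ) (hκπ : κ * h < π) (hcot : 0 ≤ κ * h * cot (κ * h) + 1) :
    κ ^ 2 * ∫ p in halfTriangle h, u p ^ 2 ≤ ∫ p in halfTriangle h, gradSq u p := by
  have h_edge : ∫ y in 0..h, symmetrize u (h, y) = 0 := by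
    refine Eq.trans (intervalIntegral.integral_congr fun y hy ↦ ?_) hmean
    rw [uIcc_of_le hh.le] at hy
    simp only [symmetrize, max_eq_left hy.2, min_eq_right hy.2]
  have h_square := sq_mul_integral_square_sq_le_of_symmetric hh
    (continuous_symmetrize hu.continuous) (symmetrize_swap u)
    (hasDerivAt_symmetrize (hu.differentiable one_ne_zero)) (memLp_symmetrizeDeriv hu) h_edge
    hκ hκπ hcot
  rw [integral_symmetrize_sq hu.continuous, integral_symmetrizeDeriv_sq hu] at h_square
  linarith

theorem sq_mul_integral_halfTriangle_sq_le_of_axis_eq_zero (hh : 0 < h) (hu : ContDiff ℝ 1 u)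
    (hu₀ : ∀ x, u (x, 0) = 0) :
    (π / h) ^ 2 / 2 * ∫ p in halfTriangle h, u p ^ 2 ≤ ∫ p in halfTriangle h, gradSq u p := by
  have h_angle : π / (2 * h) * h = π / 2 := by field_simp
  have h_left : ∀ y ∈ Ioc 0 h, symmetrize u (0, y) = 0 := fun y hy ↦ by
    simp only [symmetrize, max_eq_right hy.1.le, min_eq_left hy.1.le, hu₀]
  have h_square := sq_mul_integral_square_sq_le_sub_cot (κ := π / (2 * h)) hh
    (continuous_symmetrize hu.continuous)
    (hasDerivAt_symmetrize (hu.differentiable one_ne_zero)) (memLp_symmetrizeDeriv hu) h_left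
    (by positivity) (by linarith [pi_pos])
  rw [integral_symmetrize_sq hu.continuous, integral_symmetrizeDeriv_sq hu, h_angle,
    cot_eq_cos_div_sin, cos_pi_div_two] at h_square
  ring_nf at h_square ⊢
  exact h_square

theorem gradSq_add_add_gradSq_sub {p : ℝ × ℝ} (hu : DifferentiableAt ℝ u p)
    (hv : DifferentiableAt ℝ v p) :
    gradSq (fun p ↦ u p + v p) p + gradSq (fun p ↦ u p - v p) p =
      2 * (gradSq u p + gradSq v p) := by
  simp only [gradSq, fderiv_fun_add hu hv, fderiv_fun_sub hu hv, add_apply,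
    sub_apply]
  ring

theorem gradSq_reflection (hu : Differentiable ℝ u) (p : ℝ × ℝ) :
    gradSq (fun p ↦ u (p.1, -p.2)) p = gradSq u (p.1, -p.2) := by
  have h_comp : HasFDerivAt (fun p : ℝ × ℝ ↦ u (p.1, -p.2))
      (fderiv ℝ u (p.1, -p.2) ∘SL
        (ContinuousLinearMap.fst ℝ ℝ ℝ).prod (-ContinuousLinearMap.snd ℝ ℝ ℝ)) p :=
    (hu (p.1, -p.2)).hasFDerivAt.comp p (hasFDerivAt_fst.prodMk hasFDerivAt_snd.neg)
  have h_neg : fderiv ℝ u (p.1, -p.2) (0, -1) = -fderiv ℝ u (p.1, -p.2) (0, 1) := by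
    rw [← map_neg, Prod.neg_mk, neg_zero]
  simp [gradSq, h_comp.fderiv, h_neg]

theorem continuous_gradSq (hu : ContDiff ℝ 1 u) : Continuous (gradSq u) := by
  unfold gradSq
  fun_prop

theorem two_mul_setIntegral_triangle_sq (hu : Continuous u) :
    2 * ∫ p in triangle h, u p ^ 2 =
      (∫ p in halfTriangle h, (u p + u (p.1, -p.2)) ^ 2) +
        ∫ p in halfTriangle h, (u p - u (p.1, -p.2)) ^ 2 := by
  rw [setIntegral_triangle_eq (by fun_prop), ← integral_const_mul,
    ← integral_add (integrableOn_halfTriangle (by fun_prop))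
      (integrableOn_halfTriangle (by fun_prop))]
  congr with p
  ring

theorem two_mul_setIntegral_triangle_gradSq (hu : ContDiff ℝ 1 u) :
    2 * ∫ p in triangle h, gradSq u p =
      (∫ p in halfTriangle h, gradSq (fun p ↦ u p + u (p.1, -p.2)) p) +
        ∫ p in halfTriangle h, gradSq (fun p ↦ u p - u (p.1, -p.2)) p := by
  have hu_diff : Differentiable ℝ u := hu.differentiable one_ne_zero
  rw [setIntegral_triangle_eq (continuous_gradSq hu), ← integral_const_mul,
    ← integral_add (integrableOn_halfTriangle (continuous_gradSq (by fun_prop)))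
      (integrableOn_halfTriangle (continuous_gradSq (by fun_prop)))]
  congr with p
  rw [gradSq_add_add_gradSq_sub (by fun_prop) (by fun_prop), gradSq_reflection hu_diff]

theorem sq_mul_integral_triangle_sq_le (hh : 0 < h) (hu : ContDiff ℝ 1 u)
    (hmean : ∫ t in (-h)..h, u (h, t) = 0)
    (hκ : 0 < κ) (hκπ : κ * h < π) (hcot : 0 ≤ κ * h * cot (κ * h) + 1) :
    κ ^ 2 * ∫ p in triangle h, u p ^ 2 ≤ ∫ p in triangle h, gradSq u p := by
  have h_refl : ContDiff ℝ 1 fun p : ℝ × ℝ ↦ u (p.1, -p.2) := by fun_prop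
  have h_even := sq_mul_integral_halfTriangle_sq_le_of_mean_eq_zero hh (hu.add h_refl)
    (by rw [intervalIntegral_add_comp_neg (by fun_prop), hmean]) hκ hκπ hcot
  have h_odd := sq_mul_integral_halfTriangle_sq_le_of_axis_eq_zero hh (hu.sub h_refl) (by simp)
  have h_sq_le : κ ^ 2 ≤ (π / h) ^ 2 / 2 := by
    have h_lt := lt_two_mul_pi_div_three_of_mul_cot_nonneg (mul_pos hκ hh) hκπ hcot
    rw [div_pow, div_div, le_div_iff₀ (by positivity)]
    nlinarith [mul_pos hκ hh]
  have h_nonneg : 0 ≤ ∫ p in halfTriangle h, (u p - u (p.1, -p.2)) ^ 2 :=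
    integral_nonneg fun p ↦ sq_nonneg _
  have h_mul_sq := congrArg (κ ^ 2 * ·) (two_mul_setIntegral_triangle_sq (h := h) hu.continuous)
  have h_gradSq := two_mul_setIntegral_triangle_gradSq (h := h) hu
  simp only [mul_add] at h_mul_sq
  linarith [mul_le_mul_of_nonneg_right h_sq_le h_nonneg]

end Triangle

section Extremal

theorem integral_add_prod_self {X : Type*} [MeasurableSpace X] {μ : Measure X} [IsFiniteMeasure μ]
    {f : X → ℝ} (hf : Integrable f μ) :
    ∫ p : X × X, (f p.1 + f p.2) ∂μ.prod μ = 2 * μ.real univ * ∫ x, f x ∂μ := by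
  rw [integral_add (hf.comp_fst μ) (hf.comp_snd μ), integral_fun_fst, integral_fun_snd,
    smul_eq_mul]
  ring

theorem integral_add_sq_prod_self {X : Type*} [MeasurableSpace X] {μ : Measure X}
    [IsFiniteMeasure μ] {f : X → ℝ} (hf : MemLp f 2 μ) :
    ∫ p : X × X, (f p.1 + f p.2) ^ 2 ∂μ.prod μ =
      2 * μ.real univ * ∫ x, f x ^ 2 ∂μ + 2 * (∫ x, f x ∂μ) ^ 2 := by
  have hf_int : Integrable f μ := hf.integrable one_le_two
  calc ∫ p : X × X, (f p.1 + f p.2) ^ 2 ∂μ.prod μ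
      = ∫ p : X × X, ((f p.1 ^ 2 + f p.2 ^ 2) + 2 * (f p.1 * f p.2)) ∂μ.prod μ := by
        congr with p
        ring
    _ = 2 * μ.real univ * ∫ x, f x ^ 2 ∂μ + 2 * (∫ x, f x ∂μ) ^ 2 := by
        rw [integral_add ((hf.integrable_sq.comp_fst μ).fun_add (hf.integrable_sq.comp_snd μ))
            ((hf_int.mul_prod hf_int).const_mul 2),
          integral_add_prod_self hf.integrable_sq, integral_const_mul, integral_prod_mul, sq]

theorem setIntegral_triangle_eq_integral_squareMeasure {h : ℝ} {F : ℝ × ℝ → ℝ} (hF : Continuous F)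
    (hF_even : ∀ p, F (p.1, -p.2) = F p) (hF_symm : ∀ p, F p.swap = F p) :
    ∫ p in triangle h, F p = ∫ p, F p ∂squareMeasure h := by
  rw [setIntegral_triangle_eq hF,
    integral_squareMeasure_eq (memLp_one_iff_integrable.1 (memLp_squareMeasure hF 1))]
  simp only [hF_even, hF_symm]

/-- The extremal function `cos (κ x) + cos (κ y)`. It is symmetric in its variables and even in
both, so that integrals over `triangle h` unfold to the square `(0, h)²`. -/
noncomputable def cosSum (κ : ℝ) (p : ℝ × ℝ) : ℝ :=
  cos (κ * p.1) + cos (κ * p.2)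

variable {h κ : ℝ}

theorem contDiff_cosSum (κ : ℝ) : ContDiff ℝ 1 (cosSum κ) := by
  unfold cosSum
  fun_prop

theorem gradSq_cosSum (κ : ℝ) (p : ℝ × ℝ) :
    gradSq (cosSum κ) p = κ ^ 2 * (sin (κ * p.1) ^ 2 + sin (κ * p.2) ^ 2) := by
  have h_deriv : HasFDerivAt (cosSum κ)
      (-sin (κ * p.1) • κ • ContinuousLinearMap.fst ℝ ℝ ℝ +
        -sin (κ * p.2) • κ • ContinuousLinearMap.snd ℝ ℝ ℝ) p :=
    (hasFDerivAt_fst.const_mul κ).cos.add (hasFDerivAt_snd.const_mul κ).cos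
  simp [gradSq, h_deriv.fderiv]
  ring

theorem integral_cos_const_mul (hκ : κ ≠ 0) (a b : ℝ) :
    ∫ x in a..b, cos (κ * x) = (sin (κ * b) - sin (κ * a)) / κ := by
  rw [intervalIntegral.integral_comp_mul_left cos hκ, integral_cos, smul_eq_mul, div_eq_inv_mul]

theorem integral_cos_sq_const_mul_sub_integral_sin_sq (hκ : κ ≠ 0) :
    (∫ x in 0..h, cos (κ * x) ^ 2) - ∫ x in 0..h, sin (κ * x) ^ 2 =
      sin (κ * h) * cos (κ * h) / κ := by
  rw [← intervalIntegral.integral_sub (Continuous.intervalIntegrable (by fun_prop) _ _)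
      (Continuous.intervalIntegrable (by fun_prop) _ _),
    intervalIntegral.integral_comp_mul_left (fun x ↦ cos x ^ 2 - sin x ^ 2) hκ,
    integral_cos_sq_sub_sin_sq]
  simp [div_eq_inv_mul]

theorem integral_cosSum_hypotenuse (hκ : κ ≠ 0) (hroot : κ * h * cos (κ * h) + sin (κ * h) = 0) :
    ∫ t in (-h)..h, cosSum κ (h, t) = 0 := by
  simp only [cosSum]
  rw [intervalIntegral.integral_add intervalIntegrable_const
      (Continuous.intervalIntegrable (by fun_prop) _ _),
    intervalIntegral.integral_const, integral_cos_const_mul hκ, mul_neg, sin_neg, smul_eq_mul,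
    eq_neg_of_add_eq_zero_right hroot]
  field_simp
  ring

theorem integral_triangle_cosSum_sq (hh : 0 ≤ h) (hκ : κ ≠ 0) :
    ∫ p in triangle h, cosSum κ p ^ 2 =
      2 * h * (∫ x in 0..h, cos (κ * x) ^ 2) + 2 * (sin (κ * h) / κ) ^ 2 := by
  have h_cont : Continuous fun p ↦ cosSum κ p ^ 2 := (contDiff_cosSum κ).continuous.pow 2
  rw [setIntegral_triangle_eq_integral_squareMeasure h_cont
    (fun p ↦ by simp only [cosSum, mul_neg, cos_neg])
    (fun p ↦ by simp only [cosSum, Prod.fst_swap, Prod.snd_swap, add_comm])]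
  simp only [cosSum]
  rw [integral_add_sq_prod_self (f := fun x ↦ cos (κ * x)) (memLp_segmentMeasure (by fun_prop) 2),
    integral_segmentMeasure hh, integral_segmentMeasure hh, integral_cos_const_mul hκ]
  simp [segmentMeasure, hh]

theorem integral_triangle_gradSq_cosSum (hh : 0 ≤ h) (κ : ℝ) :
    ∫ p in triangle h, gradSq (cosSum κ) p =
      κ ^ 2 * (2 * h * ∫ x in 0..h, sin (κ * x) ^ 2) := by
  simp only [gradSq_cosSum]
  rw [setIntegral_triangle_eq_integral_squareMeasure (by fun_prop)
      (fun p ↦ by simp only [mul_neg, sin_neg, neg_sq])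
      (fun p ↦ by simp only [Prod.fst_swap, Prod.snd_swap, add_comm]),
    integral_const_mul, integral_add_prod_self (f := fun x ↦ sin (κ * x) ^ 2)
      (memLp_one_iff_integrable.1 (memLp_segmentMeasure (by fun_prop) 1)),
    integral_segmentMeasure hh]
  simp [segmentMeasure, hh]

theorem integral_triangle_cosSum_sq_pos (hh : 0 ≤ h) (hκ : κ ≠ 0) (hsin : sin (κ * h) ≠ 0) :
    0 < ∫ p in triangle h, cosSum κ p ^ 2 := by
  have h_nonneg : 0 ≤ ∫ x in 0..h, cos (κ * x) ^ 2 :=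
    intervalIntegral.integral_nonneg hh fun x _ ↦ sq_nonneg _
  rw [integral_triangle_cosSum_sq hh hκ]
  positivity

theorem integral_triangle_gradSq_cosSum_eq (hh : 0 ≤ h) (hκ : κ ≠ 0)
    (hroot : κ * h * cos (κ * h) + sin (κ * h) = 0) :
    ∫ p in triangle h, gradSq (cosSum κ) p = κ ^ 2 * ∫ p in triangle h, cosSum κ p ^ 2 := by
  have h_sub := integral_cos_sq_const_mul_sub_integral_sin_sq (h := h) hκ
  rw [integral_triangle_gradSq_cosSum hh, integral_triangle_cosSum_sq hh hκ]
  field_simp at h_sub ⊢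
  linear_combination (-κ * h) * h_sub - sin (κ * h) * hroot

end Extremal

section EuclideanPlane

/-- The map `(x, y) ↦ !₂[x, y]`, which carries sup-normed pairs to points of the Euclidean plane. -/
noncomputable def euclideanPlaneEquiv : (ℝ × ℝ) ≃L[ℝ] EuclideanSpace ℝ (Fin 2) :=
  (ContinuousLinearEquiv.finTwoArrow ℝ ℝ).symm.trans (EuclideanSpace.equiv (Fin 2) ℝ).symm

theorem setIntegral_euclideanSpace_fin_two {E : Type*} [NormedAddCommGroup E] [NormedSpace ℝ E]
    (S : Set (ℝ × ℝ)) (F : EuclideanSpace ℝ (Fin 2) → E) :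
    ∫ x in {x | (x 0, x 1) ∈ S}, F x = ∫ p in S, F !₂[p.1, p.2] := by
  let coords : EuclideanSpace ℝ (Fin 2) ≃ᵐ ℝ × ℝ :=
    (MeasurableEquiv.toLp 2 (Fin 2 → ℝ)).symm.trans MeasurableEquiv.finTwoArrow
  have h_coords : MeasurePreserving coords volume volume :=
    (volume_preserving_finTwoArrow ℝ).comp
      (EuclideanSpace.volume_preserving_symm_measurableEquiv_toLp (Fin 2))
  have h_inv : ∀ x : EuclideanSpace ℝ (Fin 2), !₂[x 0, x 1] = x := fun x ↦ by
    ext i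
    fin_cases i <;> rfl
  rw [← h_coords.setIntegral_preimage_emb coords.measurableEmbedding]
  exact integral_congr_ae (.of_forall fun x ↦ congrArg F (h_inv x).symm)

theorem norm_gradient_sq_eq_sum {ι : Type*} [Fintype ι] [DecidableEq ι]
    (w : EuclideanSpace ℝ ι → ℝ) (x : EuclideanSpace ℝ ι) :
    ‖gradient w x‖ ^ 2 = ∑ i, fderiv ℝ w x (EuclideanSpace.single i 1) ^ 2 := by
  rw [← (EuclideanSpace.basisFun ι ℝ).sum_sq_norm_inner_left]
  simp [gradient, InnerProductSpace.toDual_symm_apply]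

theorem norm_gradient_sq_eq_gradSq {w : EuclideanSpace ℝ (Fin 2) → ℝ} (hw : Differentiable ℝ w)
    (p : ℝ × ℝ) :
    ‖gradient w !₂[p.1, p.2]‖ ^ 2 = gradSq (fun p ↦ w !₂[p.1, p.2]) p := by
  have h_comp : HasFDerivAt (fun p : ℝ × ℝ ↦ w !₂[p.1, p.2])
      (fderiv ℝ w !₂[p.1, p.2] ∘SL euclideanPlaneEquiv.toContinuousLinearMap) p :=
    (hw !₂[p.1, p.2]).hasFDerivAt.comp p euclideanPlaneEquiv.hasFDerivAt
  have h_fst : euclideanPlaneEquiv (1, 0) = EuclideanSpace.single 0 1 := by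
    ext i
    fin_cases i <;> rfl
  have h_snd : euclideanPlaneEquiv (0, 1) = EuclideanSpace.single 1 1 := by
    ext i
    fin_cases i <;> rfl
  simp [norm_gradient_sq_eq_sum, gradSq, h_comp.fderiv, h_fst, h_snd]

end EuclideanPlane

theorem sqrt_le_inv_mul_sqrt {κ a b : ℝ} (hκ : 0 < κ) (hab : κ ^ 2 * a ≤ b) :
    √a ≤ κ⁻¹ * √b := by
  rw [← div_eq_inv_mul, le_div_iff₀' hκ]
  calc κ * √a = √(κ ^ 2 * a) := by rw [sqrt_mul (sq_nonneg κ), sqrt_sq hκ.le]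
    _ ≤ √b := sqrt_le_sqrt hab

theorem inv_le_of_sqrt_le_mul_sqrt {κ a C : ℝ} (hκ : 0 < κ) (ha : 0 < a)
    (hC : √a ≤ C * √(κ ^ 2 * a)) : κ⁻¹ ≤ C := by
  rw [sqrt_mul (sq_nonneg κ), sqrt_sq hκ.le, ← mul_assoc] at hC
  rw [inv_le_iff_one_le_mul₀ hκ]
  exact le_of_mul_le_mul_right (by simpa using hC) (sqrt_pos.2 ha)

end

/-- The sharp constant `C₁(Ω,Γ)` in `‖w‖_{L²(Ω)} ≤ C₁ ‖∇w‖_{L²(Ω)}` for functions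
with zero mean trace on `Γ`, where `Ω = {0 < |x₂| < x₁ < h}` is an isosceles right
triangle (with hypotenuse of length `2h`) and `Γ = {x₁ = h, x₂ ∈ [−h,h]}` is the
hypotenuse, equals `h/z̃₀`, where `z̃₀` is the unique root of `z·cot z + 1 = 0`
in `(0,π)`. -/
theorem triangle_hypotenuse_C1 (h : ℝ) (hh : 0 < h) (z₀ : ℝ)
    (hz₀ : z₀ ∈ Set.Ioo 0 π ∧ z₀ * Real.cot z₀ + 1 = 0)
    (huniq : ∀ z ∈ Set.Ioo (0:ℝ) π, z * Real.cot z + 1 = 0 → z = z₀) :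
    IsLeast {C : ℝ |
      ∀ w : EuclideanSpace ℝ (Fin 2) → ℝ, ContDiff ℝ 1 w →
        (∫ t in (-h)..h, w !₂[h, t]) = 0 →
        Real.sqrt (∫ x in {x : EuclideanSpace ℝ (Fin 2) |
            0 < |x 1| ∧ |x 1| < x 0 ∧ x 0 < h}, (w x) ^ 2) ≤
          C * Real.sqrt (∫ x in {x : EuclideanSpace ℝ (Fin 2) |
            0 < |x 1| ∧ |x 1| < x 0 ∧ x 0 < h}, ‖gradient w x‖ ^ 2)}
      (h / z₀) := by
  obtain ⟨⟨hz_pos, hz_lt⟩, hcot⟩ := hz₀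
  obtain ⟨κ, rfl⟩ : ∃ κ, z₀ = κ * h := ⟨z₀ / h, (div_mul_cancel₀ z₀ hh.ne').symm⟩
  have hκ : 0 < κ := pos_of_mul_pos_left hz_pos hh.le
  have h_sin : sin (κ * h) ≠ 0 := (sin_pos_of_pos_of_lt_pi hz_pos hz_lt).ne'
  have h_root : κ * h * cos (κ * h) + sin (κ * h) = 0 := by
    rw [mul_cos_add_sin_eq_mul_cot_add_one_mul_sin h_sin, hcot, zero_mul]
  have h_integral (F : EuclideanSpace ℝ (Fin 2) → ℝ) :
      ∫ x in {x | 0 < |x 1| ∧ |x 1| < x 0 ∧ x 0 < h}, F x = ∫ p in triangle h, F !₂[p.1, p.2] :=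
    setIntegral_euclideanSpace_fin_two (triangle h) F
  rw [show h / (κ * h) = κ⁻¹ by field_simp]
  simp only [h_integral]
  constructor
  · intro w hw hmean
    simp only [norm_gradient_sq_eq_gradSq (hw.differentiable one_ne_zero)]
    exact sqrt_le_inv_mul_sqrt hκ (sq_mul_integral_triangle_sq_le hh
      (hw.comp euclideanPlaneEquiv.contDiff) hmean hκ hz_lt hcot.ge)
  · intro C hC
    have hw : ContDiff ℝ 1 fun x : EuclideanSpace ℝ (Fin 2) ↦ cosSum κ (x 0, x 1) :=
      (contDiff_cosSum κ).comp euclideanPlaneEquiv.symm.contDiff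
    have h_extremal := hC _ hw (integral_cosSum_hypotenuse hκ.ne' h_root)
    simp only [norm_gradient_sq_eq_gradSq (hw.differentiable one_ne_zero)] at h_extremal
    refine inv_le_of_sqrt_le_mul_sqrt hκ (integral_triangle_cosSum_sq_pos hh.le hκ.ne' h_sin) ?_
    rwa [← integral_triangle_gradSq_cosSum_eq hh.le hκ.ne' h_root]
end

section
/- For every α > 0, the equation tanh(z/α)·tan(zα) = 1 has a unique root z₀ = z₀(α) in the range determined by 0 < z₀·α < π/2, and this root satisfies z₀(α)·α > π/4. -/
open Real

/-!
In the variable `θ = z * a` the equation `tanh (z * b) * tan (z * a) = 1` becomes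
`f θ * tan θ = 1` on `(0, π / 2)`, where `f θ = tanh (b / a * θ)` is continuous, increasing and
positive. Clearing the denominator, `f θ * sin θ - cos θ` changes sign between `0` and `π / 2`,
which gives a root; it is unique because `f * tan` is strictly increasing; and since `f < 1`, a root
has `tan θ > 1`, that is `θ > π / 4`.
-/

open Set

theorem strictMono_tanh : StrictMono tanh := fun x y hxy ↦
  (artanh_lt_artanh_iff ⟨neg_one_lt_tanh x, tanh_lt_one x⟩ ⟨neg_one_lt_tanh y, tanh_lt_one y⟩).1
    (by simpa only [artanh_tanh] using hxy)

theorem tanh_pos {x : ℝ} (hx : 0 < x) : 0 < tanh x := by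
  simpa only [tanh_zero] using strictMono_tanh hx

theorem continuous_tanh : Continuous tanh := by
  simp only [funext tanh_eq_sinh_div_cosh]
  exact continuous_sinh.div continuous_cosh fun x ↦ (cosh_pos x).ne'

theorem mul_tan_eq_one_iff {c θ : ℝ} (hθ : cos θ ≠ 0) : c * tan θ = 1 ↔ c * sin θ = cos θ := by
  rw [tan_eq_sin_div_cos, ← mul_div_assoc, div_eq_one_iff_eq hθ]

theorem exists_mul_tan_eq_one {f : ℝ → ℝ} (hf : ContinuousOn f (Icc 0 (π / 2)))
    (hpos : 0 < f (π / 2)) : ∃ θ ∈ Ioo 0 (π / 2), f θ * tan θ = 1 := by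
  have hcont : ContinuousOn (fun θ ↦ f θ * sin θ - cos θ) (Icc 0 (π / 2)) := by fun_prop
  have hsign : (0 : ℝ) ∈ Ioo (f 0 * sin 0 - cos 0) (f (π / 2) * sin (π / 2) - cos (π / 2)) := by
    simpa using hpos
  obtain ⟨θ, hθ, hroot⟩ := intermediate_value_Ioo pi_div_two_pos.le hcont hsign
  have hcos : 0 < cos θ := cos_pos_of_mem_Ioo ⟨by linarith [hθ.1, pi_pos], hθ.2⟩
  exact ⟨θ, hθ, (mul_tan_eq_one_iff hcos.ne').2 (sub_eq_zero.1 hroot)⟩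

theorem le_of_mul_tan_eq_one {f : ℝ → ℝ} (hf : MonotoneOn f (Ioo 0 (π / 2))) {x y : ℝ}
    (hx : x ∈ Ioo 0 (π / 2)) (hy : y ∈ Ioo 0 (π / 2)) (hfx : f x * tan x = 1)
    (hfy : f y * tan y = 1) : y ≤ x := by
  by_contra! hxy
  have htan_x : 0 < tan x := tan_pos_of_pos_of_lt_pi_div_two hx.1 hx.2
  have htan_y : 0 < tan y := tan_pos_of_pos_of_lt_pi_div_two hy.1 hy.2
  have hfx_pos : 0 < f x := pos_of_mul_pos_left (hfx ▸ one_pos) htan_x.le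
  have : f x * tan x < f y * tan y :=
    calc
      f x * tan x < f x * tan y :=
        mul_lt_mul_of_pos_left (tan_lt_tan_of_nonneg_of_lt_pi_div_two hx.1.le hy.2 hxy) hfx_pos
      _ ≤ f y * tan y := mul_le_mul_of_nonneg_right (hf hx hy hxy.le) htan_y.le
  exact this.ne (hfx.trans hfy.symm)

theorem existsUnique_mul_tan_eq_one {f : ℝ → ℝ} (hcont : ContinuousOn f (Icc 0 (π / 2)))
    (hmono : MonotoneOn f (Ioo 0 (π / 2))) (hpos : 0 < f (π / 2)) :
    ∃! θ, θ ∈ Ioo 0 (π / 2) ∧ f θ * tan θ = 1 := by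
  obtain ⟨θ, hθ, hroot⟩ := exists_mul_tan_eq_one hcont hpos
  exact ⟨θ, ⟨hθ, hroot⟩, fun η ⟨hη, hroot'⟩ ↦ le_antisymm
    (le_of_mul_tan_eq_one hmono hθ hη hroot hroot') (le_of_mul_tan_eq_one hmono hη hθ hroot' hroot)⟩

theorem pi_div_four_lt_of_mul_tan_eq_one {c θ : ℝ} (hc : c < 1) (hθ : θ ∈ Ioo 0 (π / 2))
    (h : c * tan θ = 1) : π / 4 < θ := by
  have htan : 1 < tan θ :=
    h ▸ mul_lt_of_lt_one_left (tan_pos_of_pos_of_lt_pi_div_two hθ.1 hθ.2) hc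
  have hlt : arctan 1 < arctan (tan θ) := arctan_lt_arctan_iff.2 htan
  rwa [arctan_one, arctan_tan (by linarith [hθ.1, pi_pos]) hθ.2] at hlt

theorem existsUnique_tanh_mul_tan_eq_one {c : ℝ} (hc : 0 < c) :
    ∃! θ, θ ∈ Ioo 0 (π / 2) ∧ tanh (c * θ) * tan θ = 1 :=
  existsUnique_mul_tan_eq_one (continuous_tanh.comp (continuous_const_mul c)).continuousOn
    ((strictMono_tanh.comp (strictMono_mul_left_of_pos hc)).monotone.monotoneOn _)
    (tanh_pos (mul_pos hc pi_div_two_pos))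

theorem tanh_tan_eq_one_unique_root_general {a b : ℝ} (hab : 0 < a * b) :
    (∃! z : ℝ, 0 < z * a ∧ z * a < π / 2 ∧ tanh (z * b) * tan (z * a) = 1) ∧
    (∀ z : ℝ, 0 < z * a → z * a < π / 2 → tanh (z * b) * tan (z * a) = 1 → π / 4 < z * a) := by
  refine ⟨?_, fun z hz₀ hz₁ hz ↦
    pi_div_four_lt_of_mul_tan_eq_one (tanh_lt_one _) ⟨hz₀, hz₁⟩ hz⟩
  have ha : a ≠ 0 := left_ne_zero_of_mul hab.ne'
  have hratio : 0 < b / a := by simpa only [div_pos_iff, mul_pos_iff, and_comm] using hab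
  have hscale (z : ℝ) : b / a * (z * a) = z * b := by field_simp
  have hroot := (Equiv.mulRight₀ a ha).existsUnique_congr_right.2
    (existsUnique_tanh_mul_tan_eq_one hratio)
  simpa only [Equiv.mulRight₀_apply, hscale, mem_Ioo, and_assoc] using hroot

/-- For every `α > 0`, the equation `tanh(z/α)·tan(zα) = 1` has a unique root
`z₀ = z₀(α)` in the range determined by `0 < z₀·α < π/2`, and this root satisfies
`z₀·α > π/4`. -/
theorem tanh_tan_eq_one_unique_root (α : ℝ) (hα : 0 < α) :
    (∃! z : ℝ, 0 < z * α ∧ z * α < π / 2 ∧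
        Real.tanh (z / α) * Real.tan (z * α) = 1) ∧
    (∀ z : ℝ, 0 < z * α → z * α < π / 2 →
        Real.tanh (z / α) * Real.tan (z * α) = 1 → π / 4 < z * α) := by
  simpa only [div_eq_mul_inv] using tanh_tan_eq_one_unique_root_general (mul_pos hα (inv_pos.2 hα))
end

section
/- Let h₁, h₂ > 0. The function ω ↦ (h₁/2)·cot(ω h₂/2) + (h₂/2)·cot(ω h₁/2) + 2/ω is strictly decreasing from +∞ to −∞ on the interval (0, min{2π/h₁, 2π/h₂}), so the equation (h₁/2)·cot(ω h₂/2) + (h₂/2)·cot(ω h₁/2) + 2/ω = 0 has a unique solution ω₀ in this interval; moreover ω₀ > min{π/h₁, π/h₂}. -/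
open Real Filter

/-!
Every term of `a cot (ω p) + b cot (ω q) + c / ω` is decreasing before the first positive pole
`min (π / p) (π / q)` of the cotangents. Near `0` the cotangents are nonnegative and `c / ω` blows
up. At the first pole one cotangent tends to `-∞` while the other terms, being decreasing, stay
bounded above. The intermediate value theorem gives the root. It lies beyond
`min (π / (2 * p)) (π / (2 * q))`, because up to that point both cotangents are nonnegative.
-/

open Set Topology

theorem exists_eventually_le_nhdsLT_of_antitoneOn_Ioo {α β : Type*} [LinearOrder α]
    [TopologicalSpace α] [OrderTopology α] [DenselyOrdered α] [Preorder β] {f : α → β} {a b : α}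
    (hab : a < b) (hf : AntitoneOn f (Ioo a b)) : ∃ C, ∀ᶠ x in 𝓝[<] b, f x ≤ C := by
  obtain ⟨m, hm⟩ := exists_between hab
  refine ⟨f m, ?_⟩
  filter_upwards [Ioo_mem_nhdsLT hm.2] with x hx
  exact hf hm ⟨hm.1.trans hx.1, hx.2⟩ hx.1.le

theorem existsUnique_mem_Ioo_eq_of_strictAntiOn {α β : Type*} [ConditionallyCompleteLinearOrder α]
    [TopologicalSpace α] [OrderTopology α] [DenselyOrdered α] [LinearOrder β] [TopologicalSpace β]
    [OrderClosedTopology β] {f : α → β} {a b : α} (hab : a < b)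
    (hanti : StrictAntiOn f (Ioo a b)) (hcont : ContinuousOn f (Ioo a b))
    (htop : Tendsto f (𝓝[>] a) atTop) (hbot : Tendsto f (𝓝[<] b) atBot) (y : β) :
    ∃! x, x ∈ Ioo a b ∧ f x = y := by
  have : (𝓝[>] a).NeBot := nhdsGT_neBot_of_exists_gt ⟨b, hab⟩
  have : (𝓝[<] b).NeBot := nhdsLT_neBot_of_exists_lt ⟨a, hab⟩
  obtain ⟨x, hx, hxy⟩ := isPreconnected_Ioo.intermediate_value_Iii
    (le_principal_iff.2 (Ioo_mem_nhdsLT hab)) (le_principal_iff.2 (Ioo_mem_nhdsGT hab))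
    hcont hbot htop (mem_univ y)
  exact ⟨x, ⟨hx, hxy⟩, fun z ⟨hz, hzy⟩ => hanti.injOn hz hx (hzy.trans hxy.symm)⟩

theorem strictAntiOn_cot : StrictAntiOn cot (Ioo 0 π) := by
  intro x hx y hy hxy
  have hsin_sub : 0 < sin (y - x) :=
    sin_pos_of_pos_of_lt_pi (sub_pos.2 hxy) (by linarith [hx.1, hy.2])
  rw [sin_sub] at hsin_sub
  rw [cot_eq_cos_div_sin, cot_eq_cos_div_sin,
    div_lt_div_iff₀ (sin_pos_of_mem_Ioo hy) (sin_pos_of_mem_Ioo hx)]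
  linarith

theorem continuousAt_cot {x : ℝ} (hx : sin x ≠ 0) : ContinuousAt cot x := by
  rw [funext cot_eq_cos_div_sin]
  exact continuous_cos.continuousAt.div continuous_sin.continuousAt hx

theorem tendsto_sin_nhdsLT_pi : Tendsto sin (𝓝[<] π) (𝓝[>] 0) := by
  refine tendsto_nhdsWithin_iff.2 ⟨?_, ?_⟩
  · simpa only [sin_pi] using (continuous_sin.tendsto π).mono_left nhdsWithin_le_nhds
  · filter_upwards [Ioo_mem_nhdsLT pi_pos] with x hx using sin_pos_of_mem_Ioo hx

theorem tendsto_cot_nhdsLT_pi : Tendsto cot (𝓝[<] π) atBot := by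
  have hcos : Tendsto cos (𝓝[<] π) (𝓝 (-1)) := by
    simpa only [cos_pi] using (continuous_cos.tendsto π).mono_left nhdsWithin_le_nhds
  simp only [funext cot_eq_cos_div_sin, div_eq_mul_inv]
  exact hcos.neg_mul_atTop (by norm_num) tendsto_sin_nhdsLT_pi.inv_tendsto_nhdsGT_zero

theorem cot_nonneg_of_mem_Ioc {x : ℝ} (hx : x ∈ Ioc 0 (π / 2)) : 0 ≤ cot x := by
  rw [cot_eq_cos_div_sin]
  exact div_nonneg (cos_nonneg_of_mem_Icc ⟨by linarith [hx.1, pi_pos], hx.2⟩)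
    (sin_nonneg_of_mem_Icc ⟨hx.1.le, by linarith [hx.2, pi_pos]⟩)

section ScaledCot

variable {p : ℝ}

theorem mapsTo_mul_const_Ioo_pi_div (hp : 0 < p) :
    MapsTo (fun ω => ω * p) (Ioo 0 (π / p)) (Ioo 0 π) :=
  fun _ hω => ⟨mul_pos hω.1 hp, (lt_div_iff₀ hp).1 hω.2⟩

theorem strictAntiOn_cot_mul_const (hp : 0 < p) :
    StrictAntiOn (fun ω => cot (ω * p)) (Ioo 0 (π / p)) :=
  strictAntiOn_cot.comp_strictMonoOn ((strictMono_mul_right_of_pos hp).strictMonoOn _)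
    (mapsTo_mul_const_Ioo_pi_div hp)

theorem continuousOn_cot_mul_const (hp : 0 < p) :
    ContinuousOn (fun ω => cot (ω * p)) (Ioo 0 (π / p)) :=
  ContinuousOn.comp (g := cot) (t := Ioo 0 π)
    (fun _ hx => (continuousAt_cot (sin_pos_of_mem_Ioo hx).ne').continuousWithinAt)
    (by fun_prop) (mapsTo_mul_const_Ioo_pi_div hp)

theorem tendsto_cot_mul_const_nhdsLT_pi_div (hp : 0 < p) :
    Tendsto (fun ω => cot (ω * p)) (𝓝[<] (π / p)) atBot := by
  have hmul : Tendsto (fun ω => ω * p) (𝓝[<] (π / p)) (𝓝[<] π) := by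
    refine tendsto_nhdsWithin_iff.2 ⟨?_, ?_⟩
    · simpa only [div_mul_cancel₀ π hp.ne'] using
        ((continuous_mul_const p).tendsto (π / p)).mono_left nhdsWithin_le_nhds
    · filter_upwards [self_mem_nhdsWithin] with ω hω using (lt_div_iff₀ hp).1 hω
  exact tendsto_cot_nhdsLT_pi.comp hmul

theorem cot_mul_const_nonneg (hp : 0 < p) {ω : ℝ} (hω : ω ∈ Ioc 0 (π / (2 * p))) :
    0 ≤ cot (ω * p) := by
  have hle : ω * (2 * p) ≤ π := (le_div_iff₀ (by positivity)).1 hω.2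
  exact cot_nonneg_of_mem_Ioc ⟨mul_pos hω.1 hp, by linarith⟩

theorem antitoneOn_const_mul_cot_add_const_div {b c : ℝ} (hb : 0 ≤ b) (hc : 0 ≤ c) (hp : 0 < p) :
    AntitoneOn (fun ω => b * cot (ω * p) + c / ω) (Ioo 0 (π / p)) := by
  intro x hx y hy hxy
  have hcot : cot (y * p) ≤ cot (x * p) := (strictAntiOn_cot_mul_const hp).antitoneOn hx hy hxy
  have hx0 : 0 < x := hx.1
  dsimp only
  gcongr

end ScaledCot

/-- The function `ω ↦ a cot (ω p) + b cot (ω q) + c / ω`, with weights independent of the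
frequencies `p`, `q`. The function of `cot_sum_unique_root` is the case `a = q = h₁ / 2`,
`b = p = h₂ / 2`, `c = 2`. -/
noncomputable def weightedCotSum (a b c p q ω : ℝ) : ℝ :=
  a * cot (ω * p) + b * cot (ω * q) + c / ω

section WeightedCotSum

variable {a b c p q : ℝ}

theorem weightedCotSum_swap (a b c p q : ℝ) :
    weightedCotSum a b c p q = weightedCotSum b a c q p :=
  funext fun ω => by simp only [weightedCotSum, add_comm (a * _)]

theorem strictAntiOn_weightedCotSum (ha : 0 < a) (hb : 0 ≤ b) (hc : 0 ≤ c) (hp : 0 < p)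
    (hq : 0 < q) :
    StrictAntiOn (weightedCotSum a b c p q) (Ioo 0 (min (π / p) (π / q))) := by
  have hcot := (strictAntiOn_cot_mul_const hp).mono
    (Ioo_subset_Ioo_right (min_le_left _ (π / q)))
  have hrest := (antitoneOn_const_mul_cot_add_const_div hb hc hq).mono
    (Ioo_subset_Ioo_right (min_le_right (π / p) _))
  intro x hx y hy hxy
  simpa only [weightedCotSum, add_assoc] using
    add_lt_add_of_lt_of_le (mul_lt_mul_of_pos_left (hcot hx hy hxy) ha) (hrest hx hy hxy.le)

theorem continuousOn_weightedCotSum (hp : 0 < p) (hq : 0 < q) :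
    ContinuousOn (weightedCotSum a b c p q) (Ioo 0 (min (π / p) (π / q))) := by
  have hcotp := (continuousOn_cot_mul_const hp).mono (Ioo_subset_Ioo_right (min_le_left _ (π / q)))
  have hcotq := (continuousOn_cot_mul_const hq).mono (Ioo_subset_Ioo_right (min_le_right (π / p) _))
  exact ((hcotp.const_mul a).add (hcotq.const_mul b)).add
    (continuousOn_const.div continuousOn_id fun _ hω => hω.1.ne')

theorem const_div_le_weightedCotSum (ha : 0 ≤ a) (hb : 0 ≤ b) (hp : 0 < p) (hq : 0 < q) {ω : ℝ}
    (hω : ω ∈ Ioc 0 (min (π / (2 * p)) (π / (2 * q)))) :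
    c / ω ≤ weightedCotSum a b c p q ω := by
  have hcotp := cot_mul_const_nonneg hp ⟨hω.1, hω.2.trans (min_le_left _ _)⟩
  have hcotq := cot_mul_const_nonneg hq ⟨hω.1, hω.2.trans (min_le_right _ _)⟩
  exact le_add_of_nonneg_left (by positivity)

theorem tendsto_weightedCotSum_nhdsGT_zero (ha : 0 ≤ a) (hb : 0 ≤ b) (hc : 0 < c) (hp : 0 < p)
    (hq : 0 < q) : Tendsto (weightedCotSum a b c p q) (𝓝[>] 0) atTop := by
  have hdiv : Tendsto (fun ω => c / ω) (𝓝[>] 0) atTop := by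
    simpa only [div_eq_mul_inv] using tendsto_inv_nhdsGT_zero.const_mul_atTop hc
  have hpos : 0 < min (π / (2 * p)) (π / (2 * q)) := by positivity
  refine tendsto_atTop_mono' _ ?_ hdiv
  filter_upwards [Ioc_mem_nhdsGT hpos] with ω hω
  exact const_div_le_weightedCotSum ha hb hp hq hω

theorem tendsto_weightedCotSum_nhdsLT_pi_div (ha : 0 < a) (hb : 0 ≤ b) (hc : 0 ≤ c) (hp : 0 < p)
    (hq : 0 < q) (hpq : π / p ≤ π / q) :
    Tendsto (weightedCotSum a b c p q) (𝓝[<] (π / p)) atBot := by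
  obtain ⟨C, hC⟩ := exists_eventually_le_nhdsLT_of_antitoneOn_Ioo (div_pos pi_pos hp)
    ((antitoneOn_const_mul_cot_add_const_div hb hc hq).mono (Ioo_subset_Ioo_right hpq))
  simpa +unfoldPartialApp only [weightedCotSum, add_assoc] using tendsto_atBot_add_right_of_ge' _ C
    ((tendsto_cot_mul_const_nhdsLT_pi_div hp).const_mul_atBot ha) hC

theorem tendsto_weightedCotSum_nhdsLT_min (ha : 0 < a) (hb : 0 < b) (hc : 0 ≤ c) (hp : 0 < p)
    (hq : 0 < q) : Tendsto (weightedCotSum a b c p q) (𝓝[<] min (π / p) (π / q)) atBot := by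
  rcases le_total (π / p) (π / q) with hpq | hqp
  · rw [min_eq_left hpq]
    exact tendsto_weightedCotSum_nhdsLT_pi_div ha hb.le hc hp hq hpq
  · rw [min_eq_right hqp, weightedCotSum_swap]
    exact tendsto_weightedCotSum_nhdsLT_pi_div hb ha.le hc hq hp hqp

theorem lt_of_weightedCotSum_eq_zero (ha : 0 ≤ a) (hb : 0 ≤ b) (hc : 0 < c) (hp : 0 < p)
    (hq : 0 < q) {ω : ℝ} (hω : 0 < ω) (hroot : weightedCotSum a b c p q ω = 0) :
    min (π / (2 * p)) (π / (2 * q)) < ω := by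
  by_contra! hle
  have hdiv_le := const_div_le_weightedCotSum (c := c) ha hb hp hq ⟨hω, hle⟩
  exact (div_pos hc hω).not_ge (hdiv_le.trans_eq hroot)

end WeightedCotSum

theorem cot_sum_unique_root_general {a b c p q : ℝ} (ha : 0 < a) (hb : 0 < b) (hc : 0 < c)
    (hp : 0 < p) (hq : 0 < q) :
    StrictAntiOn (weightedCotSum a b c p q) (Ioo 0 (min (π / p) (π / q))) ∧
    Tendsto (weightedCotSum a b c p q) (𝓝[Ioo 0 (min (π / p) (π / q))] 0) atTop ∧
    Tendsto (weightedCotSum a b c p q)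
      (𝓝[Ioo 0 (min (π / p) (π / q))] min (π / p) (π / q)) atBot ∧
    (∃! ω₀, ω₀ ∈ Ioo 0 (min (π / p) (π / q)) ∧ weightedCotSum a b c p q ω₀ = 0) ∧
    ∀ ω₀ ∈ Ioo 0 (min (π / p) (π / q)), weightedCotSum a b c p q ω₀ = 0 →
      min (π / (2 * p)) (π / (2 * q)) < ω₀ := by
  have hpole : 0 < min (π / p) (π / q) := by positivity
  have hanti := strictAntiOn_weightedCotSum ha hb.le hc.le hp hq
  have htop := tendsto_weightedCotSum_nhdsGT_zero ha.le hb.le hc hp hq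
  have hbot := tendsto_weightedCotSum_nhdsLT_min ha hb hc.le hp hq
  rw [nhdsWithin_Ioo_eq_nhdsGT hpole, nhdsWithin_Ioo_eq_nhdsLT hpole]
  exact ⟨hanti, htop, hbot,
    existsUnique_mem_Ioo_eq_of_strictAntiOn hpole hanti (continuousOn_weightedCotSum hp hq)
      htop hbot 0,
    fun _ hω => lt_of_weightedCotSum_eq_zero ha.le hb.le hc hp hq hω.1⟩

/-- Let `h₁, h₂ > 0`. The function
`g : ω ↦ (h₁/2)·cot(ω h₂/2) + (h₂/2)·cot(ω h₁/2) + 2/ω` is strictly decreasing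
from `+∞` to `−∞` on the interval `(0, min{2π/h₁, 2π/h₂})`, so the equation
`g ω = 0` has a unique solution `ω₀` in this interval; moreover
`ω₀ > min{π/h₁, π/h₂}`. -/
theorem cot_sum_unique_root (h₁ h₂ : ℝ) (hh₁ : 0 < h₁) (hh₂ : 0 < h₂) :
    StrictAntiOn
        (fun ω : ℝ => h₁ / 2 * Real.cot (ω * h₂ / 2) +
          h₂ / 2 * Real.cot (ω * h₁ / 2) + 2 / ω)
        (Set.Ioo 0 (min (2 * π / h₁) (2 * π / h₂))) ∧
    Tendsto
        (fun ω : ℝ => h₁ / 2 * Real.cot (ω * h₂ / 2) +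
          h₂ / 2 * Real.cot (ω * h₁ / 2) + 2 / ω)
        (nhdsWithin 0 (Set.Ioo 0 (min (2 * π / h₁) (2 * π / h₂)))) atTop ∧
    Tendsto
        (fun ω : ℝ => h₁ / 2 * Real.cot (ω * h₂ / 2) +
          h₂ / 2 * Real.cot (ω * h₁ / 2) + 2 / ω)
        (nhdsWithin (min (2 * π / h₁) (2 * π / h₂))
          (Set.Ioo 0 (min (2 * π / h₁) (2 * π / h₂)))) atBot ∧
    (∃! ω₀ : ℝ, ω₀ ∈ Set.Ioo 0 (min (2 * π / h₁) (2 * π / h₂)) ∧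
        h₁ / 2 * Real.cot (ω₀ * h₂ / 2) + h₂ / 2 * Real.cot (ω₀ * h₁ / 2) +
          2 / ω₀ = 0) ∧
    (∀ ω₀ ∈ Set.Ioo (0:ℝ) (min (2 * π / h₁) (2 * π / h₂)),
        h₁ / 2 * Real.cot (ω₀ * h₂ / 2) + h₂ / 2 * Real.cot (ω₀ * h₁ / 2) +
          2 / ω₀ = 0 → min (π / h₁) (π / h₂) < ω₀) := by
  simpa +unfoldPartialApp only [weightedCotSum, div_div_eq_mul_div, mul_comm π, mul_div_assoc,
    mul_div_cancel₀ _ (two_ne_zero' ℝ), min_comm] using cot_sum_unique_root_general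
      (half_pos hh₁) (half_pos hh₂) two_pos (half_pos hh₂) (half_pos hh₁)
end

section
/- The equation z·cot(z) + 1 = 0 has a unique root z̃₀ in the interval (0, π), and this root satisfies z̃₀ < π/√2. (Equivalently, since t ↦ t·cot(t) is strictly decreasing on (0,π), it suffices that (π/√2)·cot(π/√2) < −1.) -/
open Real

/-!
The function `z ↦ z cot z` has derivative `(sin (2z) / 2 - z) / sin² z`, which is negative on
`(0, π)` because `sin (2z) < 2z`, so it takes the value `-1` at most once there. It vanishes at
`π / 2`, and at `2π / 3` it equals `-2π / (3√3) < -1`; hence the root exists and lies below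
`2π / 3`, which is less than `π / √2` since `√2 < 3 / 2`.
-/

theorem hasDerivAt_cot {x : ℝ} (hx : sin x ≠ 0) : HasDerivAt cot (-1 / sin x ^ 2) x := by
  have hquot := (hasDerivAt_cos x).div (hasDerivAt_sin x) hx
  have hnum : -sin x * sin x - cos x * cos x = -1 := by linarith [sin_sq_add_cos_sq x]
  rw [hnum] at hquot
  exact hquot.congr_of_eventuallyEq (.of_forall cot_eq_cos_div_sin)

theorem hasDerivAt_mul_cot {x : ℝ} (hx : sin x ≠ 0) :
    HasDerivAt (fun z ↦ z * cot z) ((sin (2 * x) / 2 - x) / sin x ^ 2) x := by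
  refine ((hasDerivAt_id x).mul (hasDerivAt_cot hx)).congr_deriv ?_
  rw [cot_eq_cos_div_sin, sin_two_mul, id_eq]
  field_simp
  ring

theorem continuousOn_mul_cot : ContinuousOn (fun z ↦ z * cot z) (Set.Ioo 0 π) := fun _ hz ↦
  (hasDerivAt_mul_cot (sin_pos_of_mem_Ioo hz).ne').continuousAt.continuousWithinAt

theorem strictAntiOn_mul_cot : StrictAntiOn (fun z ↦ z * cot z) (Set.Ioo 0 π) := by
  refine strictAntiOn_of_deriv_neg (convex_Ioo 0 π) continuousOn_mul_cot fun z hz ↦ ?_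
  rw [interior_Ioo] at hz
  have hsin : 0 < sin z := sin_pos_of_mem_Ioo hz
  rw [(hasDerivAt_mul_cot hsin.ne').deriv]
  have hsin_two : sin (2 * z) < 2 * z := sin_lt (by linarith [hz.1])
  exact div_neg_of_neg_of_pos (by linarith) (by positivity)

theorem cot_pi_div_two : cot (π / 2) = 0 := by
  rw [cot_eq_cos_div_sin, cos_pi_div_two, zero_div]

theorem cot_two_pi_div_three : cot (2 * π / 3) = -1 / √3 := by
  have hangle : 2 * π / 3 = π - π / 3 := by ring
  rw [cot_eq_cos_div_sin, hangle, cos_pi_sub, sin_pi_sub, cos_pi_div_three, sin_pi_div_three]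
  field_simp

theorem mul_cot_two_pi_div_three_lt : 2 * π / 3 * cot (2 * π / 3) < -1 := by
  have hsqrt : √3 < 2 := by rw [sqrt_lt' two_pos]; norm_num
  rw [cot_two_pi_div_three, mul_div_assoc', div_lt_iff₀ (by positivity)]
  linarith [pi_gt_three]

theorem two_pi_div_three_lt_pi_div_sqrt_two : 2 * π / 3 < π / √2 := by
  have hsqrt : √2 < 3 / 2 := by rw [sqrt_lt' (by norm_num)]; norm_num
  calc 2 * π / 3 = π / (3 / 2) := by ring
    _ < π / √2 := by gcongr

theorem two_pi_div_three_mem_Ioo : 2 * π / 3 ∈ Set.Ioo 0 π :=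
  ⟨by positivity, by linarith [pi_pos]⟩

theorem exists_mul_cot_eq_neg_one : ∃ z ∈ Set.Ioo 0 π, z * cot z = -1 := by
  have hle : π / 2 ≤ 2 * π / 3 := by linarith [pi_pos]
  have hsub : Set.Icc (π / 2) (2 * π / 3) ⊆ Set.Ioo 0 π :=
    Set.Icc_subset_Ioo pi_div_two_pos two_pi_div_three_mem_Ioo.2
  have hvalues : (-1 : ℝ) ∈ Set.Icc (2 * π / 3 * cot (2 * π / 3)) (π / 2 * cot (π / 2)) :=
    ⟨mul_cot_two_pi_div_three_lt.le, by rw [cot_pi_div_two]; norm_num⟩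
  obtain ⟨z, hz, hroot⟩ := intermediate_value_Icc' hle (continuousOn_mul_cot.mono hsub) hvalues
  exact ⟨z, hsub hz, hroot⟩

theorem lt_two_pi_div_three_of_mul_cot_eq_neg_one {z : ℝ} (hz : z ∈ Set.Ioo 0 π)
    (hroot : z * cot z = -1) : z < 2 * π / 3 :=
  (strictAntiOn_mul_cot.lt_iff_gt two_pi_div_three_mem_Ioo hz).1
    (mul_cot_two_pi_div_three_lt.trans_eq hroot.symm)

/-- The equation `z·cot z + 1 = 0` has a unique root `z̃₀` in the interval
`(0,π)`, and this root satisfies `z̃₀ < π/√2`. -/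
theorem z_cot_z_add_one_unique_root :
    (∃! z : ℝ, z ∈ Set.Ioo 0 π ∧ z * Real.cot z + 1 = 0) ∧
    (∀ z ∈ Set.Ioo (0:ℝ) π, z * Real.cot z + 1 = 0 → z < π / Real.sqrt 2) := by
  simp only [add_eq_zero_iff_eq_neg]
  constructor
  · obtain ⟨z, hz, hroot⟩ := exists_mul_cot_eq_neg_one
    exact ⟨z, ⟨hz, hroot⟩, fun y ⟨hy, hroot'⟩ ↦
      strictAntiOn_mul_cot.injOn hy hz (hroot'.trans hroot.symm)⟩
  · exact fun z hz hroot ↦ (lt_two_pi_div_three_of_mul_cot_eq_neg_one hz hroot).trans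
      two_pi_div_three_lt_pi_div_sqrt_two
end
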